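/- arXiv:1406.1977 — 4 statements merged into one kernel-verified Lean document; each statement's English description precedes it below -/
import Mathlib

section
/- Let m ≥ 2 be an integer, K = ℝ or ℂ, and let p be a real number with p ≥ 2m. Suppose C > 0 is such that for every n ≥ 1 and every m-linear form T : ℓ_p^n × ⋯ × ℓ_p^n → K one has (∑_{i_1,…,i_m=1}^{n} |T(e_{i_1},…,e_{i_m})|^{2mp/(mp+p−2m)})^{(mp+p−2m)/(2mp)} ≤ C·‖T‖, where ‖T‖ is the supremum of |T| over the product of unit balls. Then for every n ≥ 1 and every m-homogeneous polynomial P(x) = ∑_{|α|=m} a_α x^α on ℓ_p^n one has (∑_{|α|=m} |a_α|^{2mp/(mp+p−2m)})^{(mp+p−2m)/(2mp)} ≤ C · (m^m / (m!)^{(mp+p−2m)/(2mp)}) · ‖P‖. -/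
open Finset Nat

/-- The `ℓ_p` norm on `𝕜^n` for a real exponent `p`. -/
noncomputable def lpNorm {𝕜 : Type*} [RCLike 𝕜] {n : ℕ} (p : ℝ) (x : Fin n → 𝕜) : ℝ :=
  (∑ i, ‖x i‖ ^ p) ^ (1 / p)

/-- The sup norm of the `m`-homogeneous polynomial with coefficients `a`
over the unit ball of `ℓ_p^n`. -/
noncomputable def polyNorm {𝕜 : Type*} [RCLike 𝕜] (p : ℝ) (m n : ℕ) (a : (Fin n → ℕ) → 𝕜) : ℝ :=
  sSup {y : ℝ | ∃ x : Fin n → 𝕜, lpNorm p x ≤ 1 ∧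
    y = ‖∑ α ∈ Finset.Nat.antidiagonalTuple n m, a α * ∏ i, x i ^ α i‖}

/-- The sup norm of an `m`-linear form over the product of unit balls of `ℓ_p^n`. -/
noncomputable def multNorm {𝕜 : Type*} [RCLike 𝕜] (p : ℝ) (m n : ℕ)
    (T : MultilinearMap 𝕜 (fun _ : Fin m => (Fin n → 𝕜)) 𝕜) : ℝ :=
  sSup {y : ℝ | ∃ x : Fin m → (Fin n → 𝕜), (∀ j, lpNorm p (x j) ≤ 1) ∧ y = ‖T x‖}

/-!
The `m`-homogeneous polynomial `P` with coefficients `a` is the diagonal of the symmetric `m`-linear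
form `T` with `T (e_{f 1}, …, e_{f m}) = a_α / N_α`, where `α` counts the occurrences in `f` and
`1 ≤ N_α ≤ m!` is the number of tuples with the same count. Each `|a_α| ^ r` is thus at most
`m! ^ (r - 1)` times the sum of `|T (e_f)| ^ r` over those tuples, and the polarization formula over
signs `±1` gives `‖T‖ ≤ (m ^ m / m!) ‖P‖`. Applying the multilinear inequality to `T` leaves the
constant `m! ^ (1 - 1 / r) * (m ^ m / m!) = m ^ m / m! ^ (1 / r)`.
-/

section Occurrences

variable {ι κ : Type*} [Fintype ι] [DecidableEq κ]

/-- The multi-index `α` of the monomial `∏ j, x (f j)`: `occurrences f i` is the number of times the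
tuple `f` takes the value `i`. -/
def occurrences (f : ι → κ) (i : κ) : ℕ := #{j | f j = i}

lemma occurrences_comp_perm (f : ι → κ) (σ : Equiv.Perm ι) :
    occurrences (f ∘ σ) = occurrences f := by
  funext i
  exact card_equiv σ (by simp)

lemma exists_perm_of_occurrences_eq {f g : ι → κ} (h : occurrences f = occurrences g) :
    ∃ σ : Equiv.Perm ι, f ∘ σ = g := by
  have fiber_equiv (i : κ) : Nonempty ({j // g j = i} ≃ {j // f j = i}) := by
    refine ⟨Fintype.equivOfCardEq ?_⟩
    simpa only [Fintype.card_subtype, occurrences] using (congrFun h i).symm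
  exact ⟨Equiv.ofFiberEquiv fun i => (fiber_equiv i).some, funext (Equiv.ofFiberEquiv_map _)⟩

lemma occurrences_eq_one_of_bijective {f : ι → κ} (hf : f.Bijective) (i : κ) :
    occurrences f i = 1 := by
  obtain ⟨j, rfl⟩ := hf.surjective i
  rw [occurrences, card_eq_one]
  exact ⟨j, by ext; simp [hf.injective.eq_iff]⟩

variable [Fintype κ]

lemma sum_occurrences (f : ι → κ) : ∑ i, occurrences f i = Fintype.card ι :=
  (card_eq_sum_card_fiberwise fun _ _ => mem_univ _).symm

lemma prod_comp_eq_prod_pow_occurrences {M : Type*} [CommMonoid M] (x : κ → M) (f : ι → κ) :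
    ∏ j, x (f j) = ∏ i, x i ^ occurrences f i := by
  simp [← Fintype.prod_fiberwise' f x, occurrences, Fintype.card_subtype]

variable [DecidableEq ι]

variable (ι) in
/-- The tuples `ι → κ` in which every `i : κ` occurs exactly `α i` times. -/
def rearrangements (α : κ → ℕ) : Finset (ι → κ) := {f | occurrences f = α}

@[simp]
lemma mem_rearrangements {α : κ → ℕ} {f : ι → κ} : f ∈ rearrangements ι α ↔ occurrences f = α := by
  simp [rearrangements]

lemma card_rearrangements_le_factorial (α : κ → ℕ) :
    #(rearrangements ι α) ≤ (Fintype.card ι)! := by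
  obtain h_empty | ⟨f, hf⟩ := (rearrangements ι α).eq_empty_or_nonempty
  · simp [h_empty]
  have subset_orbit :
      rearrangements ι α ⊆ univ.image fun σ : Equiv.Perm ι => f ∘ σ := by
    intro g hg
    rw [mem_rearrangements] at hf hg
    simpa using exists_perm_of_occurrences_eq (hf.trans hg.symm)
  exact (card_le_card subset_orbit).trans <| card_image_le.trans_eq <| Fintype.card_perm

lemma rearrangements_nonempty {α : κ → ℕ} (hα : ∑ i, α i = Fintype.card ι) :
    (rearrangements ι α).Nonempty := by
  have e : ι ≃ Σ i, Fin (α i) := Fintype.equivOfCardEq (by simp [hα])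
  refine ⟨fun j => (e j).1, mem_rearrangements.2 <| funext fun i => ?_⟩
  calc #{j | (e j).1 = i} = Fintype.card {s : Σ i, Fin (α i) // s.1 = i} := by
        rw [Fintype.card_subtype]
        exact card_equiv e (by simp)
    _ = α i := by rw [Fintype.card_congr (Equiv.sigmaSubtype i), Fintype.card_fin]

end Occurrences

lemma sum_antidiagonalTuple_sum_rearrangements {M : Type*} [AddCommMonoid M] {m n : ℕ}
    (F : (Fin m → Fin n) → M) :
    ∑ α ∈ Finset.Nat.antidiagonalTuple n m, ∑ f ∈ rearrangements (Fin m) α, F f = ∑ f, F f := by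
  refine sum_fiberwise_of_maps_to (g := occurrences) (fun f _ => ?_) F
  rw [Finset.Nat.mem_antidiagonalTuple, sum_occurrences, Fintype.card_fin]

lemma card_rearrangements_pos {m n : ℕ} {α : Fin n → ℕ}
    (hα : α ∈ Finset.Nat.antidiagonalTuple n m) : 0 < #(rearrangements (Fin m) α) := by
  rw [Finset.Nat.mem_antidiagonalTuple] at hα
  exact (rearrangements_nonempty (by rw [hα, Fintype.card_fin])).card_pos

section Polarization

variable {ι : Type*} [Fintype ι] [DecidableEq ι]

open scoped Classical in
lemma sum_signs_mul_signs_comp (g : ι → ι) :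
    ∑ ε : ι → ℤˣ, (∏ k, (ε k : ℤ)) * ∏ j, (ε (g j) : ℤ) =
      if g.Bijective then 2 ^ Fintype.card ι else 0 := by
  have sum_eq_prod : ∑ ε : ι → ℤˣ, (∏ k, (ε k : ℤ)) * ∏ j, (ε (g j) : ℤ) =
      ∏ k, ∑ s : ℤˣ, (s : ℤ) ^ (occurrences g k + 1) := by
    rw [prod_univ_sum, Fintype.piFinset_univ]
    refine sum_congr rfl fun ε _ => ?_
    rw [prod_comp_eq_prod_pow_occurrences (fun k => (ε k : ℤ)) g, ← prod_mul_distrib]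
    exact prod_congr rfl fun k _ => (_root_.pow_succ' _ _).symm
  rw [sum_eq_prod]
  split_ifs with hg
  · simp [occurrences_eq_one_of_bijective hg]
  · obtain ⟨k, hk⟩ := not_forall.1 (mt Finite.surjective_iff_bijective.1 hg)
    refine prod_eq_zero (mem_univ k) ?_
    have not_occurring : occurrences g k = 0 := by simpa [occurrences] using hk
    simp [not_occurring]

open scoped Classical in
lemma sum_ite_bijective_eq_sum_perm {M : Type*} [AddCommMonoid M] (F : (ι → ι) → M) :
    ∑ g : ι → ι, (if g.Bijective then F g else 0) = ∑ σ : Equiv.Perm ι, F σ := by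
  rw [← sum_filter]
  symm
  exact sum_nbij (fun σ : Equiv.Perm ι => ⇑σ) (by simp)
    DFunLike.coe_injective.injOn (fun g hg => ⟨.ofBijective g (by simpa using hg), by simp⟩)
    (fun _ _ => rfl)

variable {R E F : Type*} [Ring R] [AddCommGroup E] [Module R E] [AddCommGroup F] [Module R F]

theorem polarization_formula (T : MultilinearMap R (fun _ : ι => E) F)
    (hT : ∀ σ : Equiv.Perm ι, T.domDomCongr σ = T) (x : ι → E) :
    ∑ ε : ι → ℤˣ, (∏ k, (ε k : ℤ)) • T (fun _ => ∑ k, (ε k : ℤ) • x k) =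
      (2 ^ Fintype.card ι * (Fintype.card ι)!) • T x := by
  classical
  have expand (ε : ι → ℤˣ) : T (fun _ => ∑ k, (ε k : ℤ) • x k) =
      ∑ g : ι → ι, (∏ j, (ε (g j) : ℤ)) • T (x ∘ g) := by
    rw [T.map_sum]
    exact sum_congr rfl fun g _ => (T.restrictScalars ℤ).map_smul_univ _ _
  have perm_invariant (σ : Equiv.Perm ι) : T (x ∘ σ) = T x := DFunLike.congr_fun (hT σ) x
  calc ∑ ε : ι → ℤˣ, (∏ k, (ε k : ℤ)) • T (fun _ => ∑ k, (ε k : ℤ) • x k)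
    _ = ∑ g : ι → ι, (∑ ε : ι → ℤˣ, (∏ k, (ε k : ℤ)) * ∏ j, (ε (g j) : ℤ)) • T (x ∘ g) := by
        simp only [expand, smul_sum, sum_smul, mul_smul]
        exact sum_comm
    _ = ∑ σ : Equiv.Perm ι, (2 ^ Fintype.card ι : ℤ) • T (x ∘ σ) := by
        simp only [sum_signs_mul_signs_comp, ite_smul, zero_smul]
        exact sum_ite_bijective_eq_sum_perm fun g => (2 ^ Fintype.card ι : ℤ) • T (x ∘ g)
    _ = (2 ^ Fintype.card ι * (Fintype.card ι)!) • T x := by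
        simp only [perm_invariant, sum_const, Finset.card_univ, Fintype.card_perm]
        module

end Polarization

lemma factorial_mul_norm_le_of_forall_norm_signed_sum_le {ι 𝕜 E F : Type*} [Fintype ι] [RCLike 𝕜]
    [AddCommGroup E] [Module 𝕜 E] [NormedAddCommGroup F] [NormedSpace 𝕜 F]
    (T : MultilinearMap 𝕜 (fun _ : ι => E) F) (hT : ∀ σ : Equiv.Perm ι, T.domDomCongr σ = T)
    (x : ι → E) {M : ℝ}
    (hM : ∀ ε : ι → ℤˣ, ‖T (fun _ => ∑ k, (ε k : ℤ) • x k)‖ ≤ M) :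
    (Fintype.card ι)! * ‖T x‖ ≤ M := by
  classical
  have norm_sign_smul (ε : ι → ℤˣ) (v : F) : ‖(∏ k, (ε k : ℤ)) • v‖ = ‖v‖ := by
    rw [← Units.coe_prod]
    rcases Int.units_eq_one_or (∏ k, ε k) with h | h <;> simp [h]
  have scaled : 2 ^ Fintype.card ι * ((Fintype.card ι)! * ‖T x‖) ≤ 2 ^ Fintype.card ι * M :=
    calc 2 ^ Fintype.card ι * ((Fintype.card ι)! * ‖T x‖)
      _ = ‖(2 ^ Fintype.card ι * (Fintype.card ι)!) • T x‖ := by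
          rw [RCLike.norm_nsmul 𝕜, nsmul_eq_mul]
          push_cast
          ring
      _ ≤ ∑ ε : ι → ℤˣ, ‖(∏ k, (ε k : ℤ)) • T (fun _ => ∑ k, (ε k : ℤ) • x k)‖ := by
          rw [← polarization_formula T hT]
          exact norm_sum_le _ _
      _ ≤ ∑ _ε : ι → ℤˣ, M := sum_le_sum fun ε _ => (norm_sign_smul ε _).trans_le (hM ε)
      _ = 2 ^ Fintype.card ι * M := by simp
  exact le_of_mul_le_mul_left scaled (by positivity)

section LpNorm

variable {𝕜 : Type*} [RCLike 𝕜] {n : ℕ} {p : ℝ}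

lemma lpNorm_nonneg (p : ℝ) (x : Fin n → 𝕜) : 0 ≤ lpNorm p x := by
  unfold lpNorm
  positivity

lemma lpNorm_eq_norm_toLp (hp : 0 < p) (x : Fin n → 𝕜) :
    lpNorm p x = ‖WithLp.toLp (ENNReal.ofReal p) x‖ := by
  simp [PiLp.norm_eq_sum, ENNReal.toReal_ofReal hp.le, hp, lpNorm]

lemma norm_apply_le_lpNorm (hp : 1 ≤ p) (x : Fin n → 𝕜) (i : Fin n) : ‖x i‖ ≤ lpNorm p x := by
  have : Fact (1 ≤ ENNReal.ofReal p) := ⟨ENNReal.one_le_ofReal.2 hp⟩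
  rw [lpNorm_eq_norm_toLp (by linarith)]
  exact PiLp.norm_apply_le (WithLp.toLp (ENNReal.ofReal p) x) i

lemma lpNorm_smul (hp : 1 ≤ p) (c : 𝕜) (x : Fin n → 𝕜) :
    lpNorm p (c • x) = ‖c‖ * lpNorm p x := by
  have : Fact (1 ≤ ENNReal.ofReal p) := ⟨ENNReal.one_le_ofReal.2 hp⟩
  simp only [lpNorm_eq_norm_toLp (zero_lt_one.trans_le hp), WithLp.toLp_smul, norm_smul]

lemma lpNorm_sum_signs_smul_le {ι : Type*} [Fintype ι] (hp : 1 ≤ p) (ε : ι → ℤˣ)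
    (x : ι → Fin n → 𝕜) : lpNorm p (∑ k, (ε k : ℤ) • x k) ≤ ∑ k, lpNorm p (x k) := by
  have : Fact (1 ≤ ENNReal.ofReal p) := ⟨ENNReal.one_le_ofReal.2 hp⟩
  simp only [lpNorm_eq_norm_toLp (zero_lt_one.trans_le hp), WithLp.toLp_sum]
  refine norm_sum_le_of_le _ fun k _ => ?_
  rcases Int.units_eq_one_or (ε k) with h | h <;> simp [h]

lemma exists_lpNorm_le_one_eq_smul (hp : 1 ≤ p) (x : Fin n → 𝕜) :
    ∃ u : Fin n → 𝕜, lpNorm p u ≤ 1 ∧ x = (lpNorm p x : 𝕜) • u := by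
  refine ⟨(lpNorm p x : 𝕜)⁻¹ • x, ?_, ?_⟩
  · rw [lpNorm_smul hp, norm_inv, RCLike.norm_of_nonneg (lpNorm_nonneg p x)]
    exact inv_mul_le_one
  · obtain h_zero | h_ne := eq_or_ne (lpNorm p x) 0
    · have x_eq_zero : x = 0 :=
        funext fun i => norm_le_zero_iff.1 <| (norm_apply_le_lpNorm hp x i).trans_eq h_zero
      simp [x_eq_zero]
    · rw [smul_inv_smul₀ (by exact_mod_cast h_ne)]

end LpNorm

section HomogeneousPolynomial

/-- The value at `x` of the `m`-homogeneous polynomial with coefficients `a`. Only the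
entries `a α` with `|α| = m` are read. -/
def homogeneousEval {K : Type*} [CommSemiring K] {n : ℕ} (m : ℕ) (a : (Fin n → ℕ) → K)
    (x : Fin n → K) : K :=
  ∑ α ∈ Finset.Nat.antidiagonalTuple n m, a α * ∏ i, x i ^ α i

lemma homogeneousEval_smul {K : Type*} [CommSemiring K] {m n : ℕ} (a : (Fin n → ℕ) → K) (c : K)
    (x : Fin n → K) : homogeneousEval m a (c • x) = c ^ m * homogeneousEval m a x := by
  unfold homogeneousEval
  rw [mul_sum]
  refine sum_congr rfl fun α hα => ?_
  simp only [Pi.smul_apply, smul_eq_mul, mul_pow, prod_mul_distrib, prod_pow_eq_pow_sum,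
    Finset.Nat.mem_antidiagonalTuple.1 hα]
  ring

variable {𝕜 : Type*} [RCLike 𝕜] {m n : ℕ} {p : ℝ}

lemma polyNorm_nonneg (p : ℝ) (m : ℕ) (a : (Fin n → ℕ) → 𝕜) : 0 ≤ polyNorm p m n a :=
  Real.sSup_nonneg <| by
    rintro _ ⟨x, -, rfl⟩
    exact norm_nonneg _

lemma norm_homogeneousEval_le_sum_norm (a : (Fin n → ℕ) → 𝕜) {x : Fin n → 𝕜}
    (hx : ∀ i, ‖x i‖ ≤ 1) :
    ‖homogeneousEval m a x‖ ≤ ∑ α ∈ Finset.Nat.antidiagonalTuple n m, ‖a α‖ := by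
  refine norm_sum_le_of_le _ fun α _ => ?_
  simp only [norm_mul, norm_prod, norm_pow]
  exact mul_le_of_le_one_right (norm_nonneg _) <|
    prod_le_one (fun _ _ => by positivity) fun i _ => pow_le_one₀ (norm_nonneg _) (hx i)

lemma norm_homogeneousEval_le_polyNorm (hp : 1 ≤ p) (a : (Fin n → ℕ) → 𝕜) {x : Fin n → 𝕜}
    (hx : lpNorm p x ≤ 1) : ‖homogeneousEval m a x‖ ≤ polyNorm p m n a := by
  refine le_csSup ⟨∑ α ∈ Finset.Nat.antidiagonalTuple n m, ‖a α‖, ?_⟩ ⟨x, hx, rfl⟩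
  rintro _ ⟨y, hy, rfl⟩
  exact norm_homogeneousEval_le_sum_norm a fun i => (norm_apply_le_lpNorm hp y i).trans hy

lemma norm_homogeneousEval_le_lpNorm_pow_mul_polyNorm (hp : 1 ≤ p) (a : (Fin n → ℕ) → 𝕜)
    (x : Fin n → 𝕜) :
    ‖homogeneousEval m a x‖ ≤ lpNorm p x ^ m * polyNorm p m n a := by
  obtain ⟨u, hu, x_eq⟩ := exists_lpNorm_le_one_eq_smul hp x
  calc ‖homogeneousEval m a x‖ = lpNorm p x ^ m * ‖homogeneousEval m a u‖ := by
        conv_lhs => rw [x_eq]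
        rw [homogeneousEval_smul, norm_mul, norm_pow, RCLike.norm_of_nonneg (lpNorm_nonneg p x)]
    _ ≤ lpNorm p x ^ m * polyNorm p m n a :=
        mul_le_mul_of_nonneg_left (norm_homogeneousEval_le_polyNorm hp a hu)
          (pow_nonneg (lpNorm_nonneg p x) m)

theorem multNorm_le_of_diag_eq_homogeneousEval (hp : 1 ≤ p) {a : (Fin n → ℕ) → 𝕜}
    {T : MultilinearMap 𝕜 (fun _ : Fin m => (Fin n → 𝕜)) 𝕜}
    (hT : ∀ σ : Equiv.Perm (Fin m), T.domDomCongr σ = T)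
    (h_diag : ∀ x, T (fun _ => x) = homogeneousEval m a x) :
    multNorm p m n T ≤ (m : ℝ) ^ m / m ! * polyNorm p m n a := by
  have hP := polyNorm_nonneg p m a
  refine Real.sSup_le ?_ (by positivity)
  rintro _ ⟨x, hx, rfl⟩
  have lpNorm_signed_sum_le (ε : Fin m → ℤˣ) : lpNorm p (∑ k, (ε k : ℤ) • x k) ≤ m :=
    calc lpNorm p (∑ k, (ε k : ℤ) • x k) ≤ ∑ k, lpNorm p (x k) := lpNorm_sum_signs_smul_le hp ε x
      _ ≤ ∑ _k : Fin m, 1 := sum_le_sum fun k _ => hx k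
      _ = m := by simp
  have norm_diag_le (ε : Fin m → ℤˣ) :
      ‖T (fun _ => ∑ k, (ε k : ℤ) • x k)‖ ≤ (m : ℝ) ^ m * polyNorm p m n a := by
    rw [h_diag]
    refine (norm_homogeneousEval_le_lpNorm_pow_mul_polyNorm hp a _).trans ?_
    gcongr
    · exact lpNorm_nonneg p _
    · exact lpNorm_signed_sum_le ε
  have polarized := factorial_mul_norm_le_of_forall_norm_signed_sum_le T hT x norm_diag_le
  rw [Fintype.card_fin] at polarized
  rwa [div_mul_eq_mul_div, le_div_iff₀' (by positivity)]

end HomogeneousPolynomial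

section PolarForm

variable {K : Type*} [Field K] {n : ℕ}

/-- The symmetric `m`-linear form associated with the `m`-homogeneous polynomial with coefficients
`a`: each `a α` is shared equally among the tuples `f` with `∏ j, x (f j) = x ^ α`. -/
def polarForm (m : ℕ) (a : (Fin n → ℕ) → K) :
    MultilinearMap K (fun _ : Fin m => (Fin n → K)) K :=
  ∑ f : Fin m → Fin n, (a (occurrences f) / #(rearrangements (Fin m) (occurrences f))) •
    (MultilinearMap.mkPiAlgebra K (Fin m) K).compLinearMap fun j => LinearMap.proj (f j)

variable {m : ℕ} (a : (Fin n → ℕ) → K)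

lemma polarForm_apply (x : Fin m → Fin n → K) :
    polarForm m a x = ∑ f : Fin m → Fin n,
      a (occurrences f) / #(rearrangements (Fin m) (occurrences f)) * ∏ j, x j (f j) := by
  simp [polarForm]

lemma polarForm_single (f : Fin m → Fin n) :
    polarForm m a (fun j => Pi.single (f j) 1) =
      a (occurrences f) / #(rearrangements (Fin m) (occurrences f)) := by
  rw [polarForm_apply, Fintype.sum_eq_single f]
  · simp
  · intro g hg
    obtain ⟨j, hj⟩ := Function.ne_iff.1 hg
    rw [prod_eq_zero (mem_univ j) (Pi.single_eq_of_ne hj 1), mul_zero]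

lemma polarForm_domDomCongr (σ : Equiv.Perm (Fin m)) :
    (polarForm m a).domDomCongr σ = polarForm m a := by
  ext f
  change polarForm m a (fun j => Pi.single ((f ∘ σ) j) 1) =
    polarForm m a (fun j => Pi.single (f j) 1)
  rw [polarForm_single, polarForm_single, occurrences_comp_perm]

lemma polarForm_diag [CharZero K] (x : Fin n → K) :
    polarForm m a (fun _ => x) = homogeneousEval m a x := by
  rw [polarForm_apply, ← sum_antidiagonalTuple_sum_rearrangements, homogeneousEval]
  refine sum_congr rfl fun α hα => ?_
  have card_ne_zero : (#(rearrangements (Fin m) α) : K) ≠ 0 := by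
    exact_mod_cast (card_rearrangements_pos hα).ne'
  calc ∑ f ∈ rearrangements (Fin m) α,
        a (occurrences f) / #(rearrangements (Fin m) (occurrences f)) * ∏ j, x (f j)
    _ = ∑ _f ∈ rearrangements (Fin m) α,
        a α / #(rearrangements (Fin m) α) * ∏ i, x i ^ α i :=
      sum_congr rfl fun f hf => by
        rw [prod_comp_eq_prod_pow_occurrences, mem_rearrangements.1 hf]
    _ = a α * ∏ i, x i ^ α i := by
      rw [sum_const, nsmul_eq_mul]
      field_simp

end PolarForm

section Coefficients

variable {𝕜 : Type*} [RCLike 𝕜] {m n : ℕ} {r : ℝ}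

lemma rpow_le_rpow_sub_one_mul_div_rpow {N M t : ℝ} (hN : 0 < N) (hNM : N ≤ M) (ht : 0 ≤ t)
    (hr : 1 ≤ r) : t ^ r ≤ M ^ (r - 1) * (N * (t / N) ^ r) :=
  calc t ^ r = N ^ (r - 1) * (N * (t / N) ^ r) := by
        rw [Real.div_rpow ht hN.le, Real.rpow_sub_one hN.ne']
        field_simp
    _ ≤ M ^ (r - 1) * (N * (t / N) ^ r) := by gcongr

lemma sum_norm_coeff_rpow_le (a : (Fin n → ℕ) → 𝕜) (hr : 1 ≤ r) :
    ∑ α ∈ Finset.Nat.antidiagonalTuple n m, ‖a α‖ ^ r ≤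
      (m ! : ℝ) ^ (r - 1) *
        ∑ f : Fin m → Fin n, ‖polarForm m a (fun j => Pi.single (f j) 1)‖ ^ r := by
  rw [← sum_antidiagonalTuple_sum_rearrangements, mul_sum]
  refine sum_le_sum fun α hα => ?_
  have sum_eq : ∑ f ∈ rearrangements (Fin m) α,
      ‖polarForm m a (fun j => Pi.single (f j) 1)‖ ^ r =
        #(rearrangements (Fin m) α) * (‖a α‖ / #(rearrangements (Fin m) α)) ^ r := by
    rw [← nsmul_eq_mul, ← sum_const]
    refine sum_congr rfl fun f hf => ?_
    rw [polarForm_single, mem_rearrangements.1 hf, norm_div, RCLike.norm_natCast]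
  have card_le : #(rearrangements (Fin m) α) ≤ m ! := by
    simpa only [Fintype.card_fin] using card_rearrangements_le_factorial (ι := Fin m) α
  rw [sum_eq]
  exact rpow_le_rpow_sub_one_mul_div_rpow (by exact_mod_cast card_rearrangements_pos hα)
    (by exact_mod_cast card_le) (norm_nonneg _) hr

lemma rpow_sum_norm_coeff_le (a : (Fin n → ℕ) → 𝕜) (hr : 1 ≤ r) :
    (∑ α ∈ Finset.Nat.antidiagonalTuple n m, ‖a α‖ ^ r) ^ r⁻¹ ≤
      (m ! : ℝ) / (m ! : ℝ) ^ r⁻¹ *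
        (∑ f : Fin m → Fin n, ‖polarForm m a (fun j => Pi.single (f j) 1)‖ ^ r) ^ r⁻¹ := by
  have hr_pos : 0 < r := by linarith
  have factorial_rpow : ((m ! : ℝ) ^ (r - 1)) ^ r⁻¹ = m ! / (m ! : ℝ) ^ r⁻¹ := by
    rw [← Real.rpow_mul (by positivity), sub_mul, mul_inv_cancel₀ hr_pos.ne', one_mul,
      Real.rpow_sub (by positivity), Real.rpow_one]
  rw [← factorial_rpow, ← Real.mul_rpow (by positivity) (by positivity)]
  exact Real.rpow_le_rpow (by positivity) (sum_norm_coeff_rpow_le a hr) (by positivity)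

end Coefficients

theorem polynomial_HL_from_multilinear_general {𝕜 : Type*} [RCLike 𝕜] {m n : ℕ} {p r C : ℝ}
    (hp : 1 ≤ p) (hr : 1 ≤ r) (hC : 0 ≤ C)
    (hmult : ∀ T : MultilinearMap 𝕜 (fun _ : Fin m => (Fin n → 𝕜)) 𝕜,
      (∀ σ : Equiv.Perm (Fin m), T.domDomCongr σ = T) →
      (∑ f : Fin m → Fin n, ‖T (fun j => Pi.single (f j) 1)‖ ^ r) ^ r⁻¹ ≤ C * multNorm p m n T)
    (a : (Fin n → ℕ) → 𝕜) :
    (∑ α ∈ Finset.Nat.antidiagonalTuple n m, ‖a α‖ ^ r) ^ r⁻¹ ≤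
      C * ((m : ℝ) ^ m / (m ! : ℝ) ^ r⁻¹) * polyNorm p m n a :=
  calc (∑ α ∈ Finset.Nat.antidiagonalTuple n m, ‖a α‖ ^ r) ^ r⁻¹
    _ ≤ m ! / (m ! : ℝ) ^ r⁻¹ *
        (∑ f : Fin m → Fin n, ‖polarForm m a (fun j => Pi.single (f j) 1)‖ ^ r) ^ r⁻¹ :=
      rpow_sum_norm_coeff_le a hr
    _ ≤ m ! / (m ! : ℝ) ^ r⁻¹ * (C * multNorm p m n (polarForm m a)) := by
      gcongr
      exact hmult _ (polarForm_domDomCongr a)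
    _ ≤ m ! / (m ! : ℝ) ^ r⁻¹ * (C * ((m : ℝ) ^ m / m ! * polyNorm p m n a)) := by
      gcongr
      exact multNorm_le_of_diag_eq_homogeneousEval hp (polarForm_domDomCongr a) (polarForm_diag a)
    _ = C * ((m : ℝ) ^ m / (m ! : ℝ) ^ r⁻¹) * polyNorm p m n a := by field_simp

lemma one_le_hardyLittlewood_exponent {m p : ℝ} (hm : 1 ≤ m) (hp : 2 * m ≤ p) :
    1 ≤ 2 * m * p / (m * p + p - 2 * m) := by
  have denom_pos : 0 < m * p + p - 2 * m := by nlinarith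
  rw [one_le_div denom_pos]
  nlinarith

/-- If `C` is a constant for the `m`-linear Hardy–Littlewood inequality on
`ℓ_p^n` (`p ≥ 2m`), then `C · m^m/(m!)^{(mp+p-2m)/(2mp)}` is a constant for the polynomial
Hardy–Littlewood inequality. -/
theorem polynomial_HL_from_multilinear {𝕜 : Type*} [RCLike 𝕜] (m : ℕ) (hm : 2 ≤ m)
    (p : ℝ) (hp : 2 * (m : ℝ) ≤ p) (C : ℝ) (hC : 0 < C)
    (hmult : ∀ n : ℕ, 1 ≤ n → ∀ T : MultilinearMap 𝕜 (fun _ : Fin m => (Fin n → 𝕜)) 𝕜,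
      (∑ f : Fin m → Fin n, ‖T (fun j => Pi.single (f j) 1)‖
          ^ (2 * (m : ℝ) * p / ((m : ℝ) * p + p - 2 * m)))
        ^ (((m : ℝ) * p + p - 2 * m) / (2 * (m : ℝ) * p)) ≤ C * multNorm p m n T) :
    ∀ n : ℕ, 1 ≤ n → ∀ a : (Fin n → ℕ) → 𝕜,
      (∑ α ∈ Finset.Nat.antidiagonalTuple n m, ‖a α‖
          ^ (2 * (m : ℝ) * p / ((m : ℝ) * p + p - 2 * m)))
        ^ (((m : ℝ) * p + p - 2 * m) / (2 * (m : ℝ) * p)) ≤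
      C * ((m : ℝ) ^ m / (m ! : ℝ) ^ (((m : ℝ) * p + p - 2 * m) / (2 * (m : ℝ) * p))) *
        polyNorm p m n a := by
  intro n hn a
  have hm_one : (1 : ℝ) ≤ m := by exact_mod_cast one_le_two.trans hm
  simpa only [inv_div] using polynomial_HL_from_multilinear_general (by linarith)
    (one_le_hardyLittlewood_exponent hm_one hp) hC.le
    (fun T _ => by simpa only [inv_div] using hmult n hn T) a
end

section
/- Let m, n be positive integers, let 1 ≤ k ≤ m be an integer, and let s, q, ρ be real numbers with 1 ≤ s ≤ q and m/ρ = k/s + (m−k)/q. Then for every scalar array (a_i)_{i ∈ M(m,n)} one has (∑_{i ∈ M(m,n)} |a_i|^ρ)^{1/ρ} ≤ ∏_{S ∈ P_k(m)} (∑_{i_S ∈ M(k,n)} (∑_{i_{Ŝ} ∈ M(m−k,n)} |a_i|^q)^{s/q})^{(1/s)·(1/C(m,k))}, where C(m,k) is the binomial coefficient. -/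
open Finset

/-!
Finner's inequality, a Hölder inequality for functions of some of the coordinates, follows from
Hölder's inequality applied in one coordinate at a time. To deduce the interpolation inequality, let
`b_S(i_S)` be the `ℓ_q` norm of `a` over the coordinates outside `S`. Where `a ≠ 0`, for all `r`,
`a ^ r = (a ^ q * b_S ^ (s - q)) ^ (r / q) * (b_S ^ s) ^ (r / s - r / q)`,
where the first base sums over all coordinates, and the second over the coordinates in `S`, to the
`s`-th power of the mixed norm. Multiplying these identities over all `S`, with `r = ρ / C(m,k)`,
and summing, the relation between `ρ`, `s` and `q` is the covering condition of Finner's inequality: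
each coordinate lies in the fraction `k / m` of the sets `S`.
-/

open MeasureTheory
open scoped ENNReal NNReal

section Finner

variable {ι τ : Type*} [DecidableEq ι] {α : ι → Type*} {T : Finset τ} {S : τ → Finset ι}
  {w : τ → ℝ}

theorem lmarginal_update_of_dependsOn [∀ j, MeasurableSpace (α j)] {μ : ∀ j, Measure (α j)}
    {f : (∀ j, α j) → ℝ≥0∞} {s : Set ι} (hf : DependsOn f s) (U : Finset ι) {j : ι}
    (hj : j ∉ s) (x : ∀ j, α j) (y : α j) :
    (∫⋯∫⁻_U, f ∂μ) (Function.update x j y) = (∫⋯∫⁻_U, f ∂μ) x := by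
  refine lintegral_congr fun z => hf fun i hi => ?_
  have hij : i ≠ j := ne_of_mem_of_not_mem hi hj
  simp only [Function.updateFinset, Function.update_of_ne hij]

theorem lintegral_update_prod_lmarginal_rpow_le [∀ j, MeasurableSpace (α j)]
    (μ : ∀ j, Measure (α j)) [∀ j, SigmaFinite (μ j)] (hw : ∀ t ∈ T, 0 ≤ w t)
    {f : τ → (∀ j, α j) → ℝ≥0∞} (hf : ∀ t ∈ T, Measurable (f t))
    (hfS : ∀ t ∈ T, DependsOn (f t) (S t)) {U : Finset ι} {j : ι} (hj : j ∉ U)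
    (hcover : ∑ t ∈ T with j ∈ S t, w t = 1) (x : ∀ j, α j) :
    ∫⁻ y, ∏ t ∈ T, (∫⋯∫⁻_U ∩ S t, f t ∂μ) (Function.update x j y) ^ w t ∂μ j ≤
      ∏ t ∈ T, (∫⋯∫⁻_insert j U ∩ S t, f t ∂μ) x ^ w t := by
  have marginal_const (y : α j) : ∀ t ∈ T.filter (j ∉ S ·),
      (∫⋯∫⁻_U ∩ S t, f t ∂μ) (Function.update x j y) ^ w t =
        (∫⋯∫⁻_insert j U ∩ S t, f t ∂μ) x ^ w t := fun t ht => by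
    rw [mem_filter] at ht
    rw [lmarginal_update_of_dependsOn (hfS t ht.1) _ ht.2, insert_inter_of_notMem ht.2]
  have lintegral_marginal : ∀ t ∈ T.filter (j ∈ S ·),
      (∫⁻ y, (∫⋯∫⁻_U ∩ S t, f t ∂μ) (Function.update x j y) ∂μ j) ^ w t =
        (∫⋯∫⁻_insert j U ∩ S t, f t ∂μ) x ^ w t := fun t ht => by
    rw [mem_filter] at ht
    rw [insert_inter_of_mem ht.2, lmarginal_insert _ (hf t ht.1) (by simp [hj])]
  have measurable_marginal : ∀ t ∈ T.filter (j ∈ S ·),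
      Measurable fun y => (∫⋯∫⁻_U ∩ S t, f t ∂μ) (Function.update x j y) := fun t ht =>
    ((hf t (mem_filter.1 ht).1).lmarginal μ).comp (measurable_update x)
  simp only [← prod_filter_not_mul_prod_filter T (j ∈ S ·)]
  calc _ = (∏ t ∈ T with j ∉ S t, (∫⋯∫⁻_insert j U ∩ S t, f t ∂μ) x ^ w t) *
        ∫⁻ y, ∏ t ∈ T with j ∈ S t,
          (∫⋯∫⁻_U ∩ S t, f t ∂μ) (Function.update x j y) ^ w t ∂μ j := by
        rw [← lintegral_const_mul _
          (measurable_fun_prod _ fun t ht => (measurable_marginal t ht).pow_const _)]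
        simp only [prod_congr rfl (marginal_const _)]
    _ ≤ _ := by
        gcongr
        exact (ENNReal.lintegral_prod_norm_pow_le _
          (fun t ht => (measurable_marginal t ht).aemeasurable) hcover
          fun t ht => hw t (mem_filter.1 ht).1).trans_eq (prod_congr rfl lintegral_marginal)

theorem lmarginal_prod_rpow_le [∀ j, MeasurableSpace (α j)] (μ : ∀ j, Measure (α j))
    [∀ j, SigmaFinite (μ j)] (hw : ∀ t ∈ T, 0 ≤ w t)
    {f : τ → (∀ j, α j) → ℝ≥0∞} (hf : ∀ t ∈ T, Measurable (f t))
    (hfS : ∀ t ∈ T, DependsOn (f t) (S t)) (U : Finset ι)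
    (hcover : ∀ j ∈ U, ∑ t ∈ T with j ∈ S t, w t = 1) (x : ∀ j, α j) :
    (∫⋯∫⁻_U, fun x => ∏ t ∈ T, f t x ^ w t ∂μ) x ≤
      ∏ t ∈ T, (∫⋯∫⁻_U ∩ S t, f t ∂μ) x ^ w t := by
  induction U using Finset.induction generalizing x with
  | empty => simp
  | insert j U hj ih =>
    calc (∫⋯∫⁻_insert j U, fun x => ∏ t ∈ T, f t x ^ w t ∂μ) x
        = ∫⁻ y, (∫⋯∫⁻_U, fun x => ∏ t ∈ T, f t x ^ w t ∂μ) (Function.update x j y) ∂μ j :=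
          lmarginal_insert _ (measurable_fun_prod _ fun t ht => (hf t ht).pow_const _) hj x
      _ ≤ ∫⁻ y, ∏ t ∈ T, (∫⋯∫⁻_U ∩ S t, f t ∂μ) (Function.update x j y) ^ w t ∂μ j :=
          lintegral_mono fun y => ih (fun i hi => hcover i (mem_insert_of_mem hi)) _
      _ ≤ ∏ t ∈ T, (∫⋯∫⁻_insert j U ∩ S t, f t ∂μ) x ^ w t :=
          lintegral_update_prod_lmarginal_rpow_le μ hw hf hfS hj
            (hcover j (mem_insert_self j U)) x

/-- **Finner's inequality**. -/
theorem lintegral_prod_restrict_rpow_le [Fintype ι] [∀ j, MeasurableSpace (α j)]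
    (μ : ∀ j, Measure (α j)) [∀ j, SigmaFinite (μ j)] (hw : ∀ t ∈ T, 0 ≤ w t)
    (hcover : ∀ j, ∑ t ∈ T with j ∈ S t, w t = 1)
    {f : ∀ t, (∀ j : S t, α j) → ℝ≥0∞} (hf : ∀ t ∈ T, Measurable (f t)) :
    ∫⁻ x, ∏ t ∈ T, f t ((S t).restrict x) ^ w t ∂Measure.pi μ ≤
      ∏ t ∈ T, (∫⁻ g, f t g ∂Measure.pi fun j : S t => μ j) ^ w t := by
  rcases isEmpty_or_nonempty (∀ j, α j) with _ | ⟨⟨x⟩⟩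
  · rw [lintegral_of_isEmpty]
    exact zero_le
  have lmarginal_restrict (t : τ) : (∫⋯∫⁻_S t, fun x => f t ((S t).restrict x) ∂μ) x =
      ∫⁻ g, f t g ∂Measure.pi fun j : S t => μ j := by
    simp only [lmarginal, Function.restrict_updateFinset]
  have finner := lmarginal_prod_rpow_le μ hw
    (fun t ht => (hf t ht).comp (measurable_restrict _))
    (fun t _ _ _ hxy => congrArg (f t) (dependsOn_restrict _ hxy)) univ (fun j _ => hcover j) x
  simpa only [lmarginal_univ, univ_inter, Function.comp_def, lmarginal_restrict] using finner

theorem lintegral_pi_count [Fintype ι] [∀ j, Fintype (α j)] [∀ j, MeasurableSpace (α j)]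
    [∀ j, MeasurableSingletonClass (α j)] (f : (∀ j, α j) → ℝ≥0∞) :
    ∫⁻ x, f x ∂Measure.pi (fun _ => Measure.count) = ∑ x, f x := by
  simp [lintegral_fintype]

theorem sum_prod_restrict_rpow_le [Fintype ι] [∀ j, Fintype (α j)] (hw : ∀ t ∈ T, 0 ≤ w t)
    (hcover : ∀ j, ∑ t ∈ T with j ∈ S t, w t = 1) (f : ∀ t, (∀ j : S t, α j) → ℝ≥0) :
    ∑ x, ∏ t ∈ T, f t ((S t).restrict x) ^ w t ≤ ∏ t ∈ T, (∑ g, f t g) ^ w t := by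
  let (j : ι) : MeasurableSpace (α j) := ⊤
  have finner := lintegral_prod_restrict_rpow_le (fun j => (Measure.count : Measure (α j)))
    hw hcover (fun t _ => measurable_of_finite fun g => (f t g : ℝ≥0∞))
  have coe_prod_rpow (F : τ → ℝ≥0) :
      ∏ t ∈ T, (F t : ℝ≥0∞) ^ w t = ↑(∏ t ∈ T, F t ^ w t) := by
    push_cast
    exact prod_congr rfl fun t ht => (ENNReal.coe_rpow_of_nonneg _ (hw t ht)).symm
  simpa only [lintegral_pi_count, ← ENNReal.ofNNReal_finsetSum, coe_prod_rpow,
    ENNReal.coe_le_coe] using finner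

theorem sum_prod_rpow_mul_prod_restrict_rpow_le [Fintype ι] [∀ j, Fintype (α j)] {v : τ → ℝ}
    (hv : ∀ t ∈ T, 0 ≤ v t) (hw : ∀ t ∈ T, 0 ≤ w t)
    (hcover : ∀ j, ∑ t ∈ T, v t + ∑ t ∈ T with j ∈ S t, w t = 1)
    (F : τ → (∀ j, α j) → ℝ≥0) (f : ∀ t, (∀ j : S t, α j) → ℝ≥0) :
    ∑ x, (∏ t ∈ T, F t x ^ v t) * ∏ t ∈ T, f t ((S t).restrict x) ^ w t ≤
      (∏ t ∈ T, (∑ x, F t x) ^ v t) * ∏ t ∈ T, (∑ g, f t g) ^ w t := by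
  let e : (∀ j : (univ : Finset ι), α j) ≃ ∀ j, α j :=
    Equiv.piCongrLeft α (Equiv.subtypeUnivEquiv mem_univ)
  have sum_univ_coords (t : τ) : ∑ g, F t (e g) = ∑ x, F t x := e.sum_comp (F t)
  have e_restrict (x : ∀ j, α j) : e (univ.restrict x) = x := e.symm.injective (by ext; rfl)
  have finner := sum_prod_restrict_rpow_le (α := α) (T := T.disjSum T)
    (S := Sum.elim (fun _ => univ) S) (w := Sum.elim v w)
    (by simpa [or_imp, forall_and] using ⟨hv, hw⟩)
    (fun j => by
      rw [sum_filter, sum_disjSum, ← hcover j, sum_filter]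
      simp only [Sum.elim_inl, Sum.elim_inr, mem_univ, if_true]
      rfl)
    (Sum.rec (fun t g => F t (e g)) f)
  simp only [prod_disjSum, Sum.elim_inl, Sum.elim_inr, e_restrict] at finner
  simp only [← sum_univ_coords]
  exact finner

end Finner

section MixedNorm

variable {ι τ : Type*} [Fintype ι] [DecidableEq ι] {α : ι → Type*} [∀ j, Fintype (α j)]

/-- The `ℓ_q` norm of the section of the array `a` obtained by fixing the coordinates in `S` to
the values `g`. Scalar arrays enter through their absolute values, hence the codomain `ℝ≥0`. -/
noncomputable def sectionNorm (q : ℝ) (S : Finset ι) (a : (∀ j, α j) → ℝ≥0)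
    (g : ∀ j : S, α j) : ℝ≥0 :=
  (∑ h : ∀ j : {j // j ∉ S}, α j,
    a ((Equiv.piEquivPiSubtypeProd (· ∈ S) α).symm (g, h)) ^ q) ^ (1 / q)

/-- The mixed `ℓ_s(ℓ_q)` norm of the array `a`: the `ℓ_q` norm over the coordinates outside `S` is
taken first, then the `ℓ_s` norm over the coordinates in `S`. -/
noncomputable def mixedNorm (s q : ℝ) (S : Finset ι) (a : (∀ j, α j) → ℝ≥0) : ℝ≥0 :=
  (∑ g : ∀ j : S, α j, sectionNorm q S a g ^ s) ^ (1 / s)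

variable {s q : ℝ}

theorem mixedNorm_eq (S : Finset ι) (a : (∀ j, α j) → ℝ≥0) :
    mixedNorm s q S a = (∑ g : ∀ j : {j // j ∈ S}, α j, (∑ h : ∀ j : {j // j ∉ S}, α j,
      a (fun j => if hj : j ∈ S then g ⟨j, hj⟩ else h ⟨j, hj⟩) ^ q) ^ (s / q)) ^ (1 / s) := by
  simp only [mixedNorm, sectionNorm, ← NNReal.rpow_mul, one_div_mul_eq_div]
  rfl

theorem mixedNorm_rpow (hs : s ≠ 0) (S : Finset ι) (a : (∀ j, α j) → ℝ≥0) :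
    mixedNorm s q S a ^ s = ∑ g : ∀ j : S, α j, sectionNorm q S a g ^ s := by
  rw [mixedNorm, one_div, NNReal.rpow_inv_rpow hs]

theorem sum_rpow_mul_sectionNorm (hq : q ≠ 0) (S : Finset ι) (a : (∀ j, α j) → ℝ≥0)
    (φ : (∀ j : S, α j) → ℝ≥0) :
    ∑ x, a x ^ q * φ (S.restrict x) = ∑ g, sectionNorm q S a g ^ q * φ g := by
  rw [← (Equiv.piEquivPiSubtypeProd (· ∈ S) α).symm.sum_comp, Fintype.sum_prod_type]
  refine sum_congr rfl fun g _ => ?_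
  have restrict_glue (h : ∀ j : {j // j ∉ S}, α j) :
      S.restrict ((Equiv.piEquivPiSubtypeProd (· ∈ S) α).symm (g, h)) = g :=
    congrArg Prod.fst ((Equiv.piEquivPiSubtypeProd (· ∈ S) α).apply_symm_apply (g, h))
  simp only [restrict_glue, ← sum_mul]
  rw [sectionNorm, one_div, NNReal.rpow_inv_rpow hq]

theorem sum_rpow_mul_sectionNorm_rpow (hs : 0 < s) (hq : 0 < q) (S : Finset ι)
    (a : (∀ j, α j) → ℝ≥0) :
    ∑ x, a x ^ q * sectionNorm q S a (S.restrict x) ^ (s - q) = mixedNorm s q S a ^ s := by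
  rw [sum_rpow_mul_sectionNorm hq.ne' S a fun g => sectionNorm q S a g ^ (s - q),
    mixedNorm_rpow hs.ne']
  refine sum_congr rfl fun g _ => ?_
  rw [← NNReal.rpow_add' (by simpa using hs.ne'), add_sub_cancel]

theorem le_sectionNorm_restrict (hq : 0 < q) (S : Finset ι) (a : (∀ j, α j) → ℝ≥0)
    (x : ∀ j, α j) : a x ≤ sectionNorm q S a (S.restrict x) := by
  rw [sectionNorm, one_div, NNReal.le_rpow_inv_iff hq]
  calc a x ^ q = a ((Equiv.piEquivPiSubtypeProd (· ∈ S) α).symm (S.restrict x, fun j => x j)) ^ q :=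
        congrArg (a · ^ q) ((Equiv.piEquivPiSubtypeProd (· ∈ S) α).symm_apply_apply x).symm
    _ ≤ _ := single_le_sum_of_canonicallyOrdered
        (f := fun h => a ((Equiv.piEquivPiSubtypeProd (· ∈ S) α).symm (S.restrict x, h)) ^ q)
        (mem_univ fun j : {j // j ∉ S} => x j)

theorem rpow_le_rpow_mul_sectionNorm_rpow (hs : 0 < s) (hq : 0 < q) {r : ℝ} (hr : 0 ≤ r)
    (S : Finset ι) (a : (∀ j, α j) → ℝ≥0) (x : ∀ j, α j) :
    a x ^ r ≤ (a x ^ q * sectionNorm q S a (S.restrict x) ^ (s - q)) ^ (r / q) *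
      (sectionNorm q S a (S.restrict x) ^ s) ^ (r / s - r / q) := by
  rcases hr.eq_or_lt with rfl | hr
  · simp
  rcases eq_zero_or_pos (a x) with hax | hax
  · simp [hax, hr.ne']
  have hb : sectionNorm q S a (S.restrict x) ≠ 0 :=
    (hax.trans_le (le_sectionNorm_restrict hq S a x)).ne'
  have exponent_eq_zero : (s - q) * (r / q) + s * (r / s - r / q) = 0 := by
    field_simp
    ring
  rw [NNReal.mul_rpow, ← NNReal.rpow_mul, ← NNReal.rpow_mul, ← NNReal.rpow_mul, mul_assoc,
    ← NNReal.rpow_add hb, exponent_eq_zero, NNReal.rpow_zero, mul_one, mul_div_cancel₀ _ hq.ne']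

variable {T : Finset τ} {S : τ → Finset ι}

theorem sum_rpow_sum_le_prod_mixedNorm_rpow (hs : 0 < s) (hsq : s ≤ q) {r : τ → ℝ}
    (hr : ∀ t ∈ T, 0 ≤ r t)
    (hcover : ∀ j, ∑ t ∈ T, r t / q + ∑ t ∈ T with j ∈ S t, (r t / s - r t / q) = 1)
    (a : (∀ j, α j) → ℝ≥0) :
    ∑ x, a x ^ (∑ t ∈ T, r t) ≤ ∏ t ∈ T, mixedNorm s q (S t) a ^ r t := by
  have hq : 0 < q := hs.trans_le hsq
  have hrq (t) (ht : t ∈ T) : 0 ≤ r t / q := div_nonneg (hr t ht) hq.le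
  have hrsq (t) (ht : t ∈ T) : 0 ≤ r t / s - r t / q :=
    sub_nonneg.2 (div_le_div_of_nonneg_left (hr t ht) hs hsq)
  calc ∑ x, a x ^ (∑ t ∈ T, r t) = ∑ x, ∏ t ∈ T, a x ^ r t :=
        sum_congr rfl fun x _ => NNReal.eq <| by
          push_cast
          exact Real.rpow_sum_of_nonneg (a x).coe_nonneg hr
    _ ≤ ∑ x, (∏ t ∈ T,
            (a x ^ q * sectionNorm q (S t) a ((S t).restrict x) ^ (s - q)) ^ (r t / q)) *
          ∏ t ∈ T, (sectionNorm q (S t) a ((S t).restrict x) ^ s) ^ (r t / s - r t / q) := by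
        simp only [← prod_mul_distrib]
        gcongr with x _ t ht
        exact rpow_le_rpow_mul_sectionNorm_rpow hs hq (hr t ht) (S t) a x
    _ ≤ (∏ t ∈ T, (mixedNorm s q (S t) a ^ s) ^ (r t / q)) *
          ∏ t ∈ T, (mixedNorm s q (S t) a ^ s) ^ (r t / s - r t / q) := by
        simpa only [sum_rpow_mul_sectionNorm_rpow hs hq, ← mixedNorm_rpow hs.ne'] using
          sum_prod_rpow_mul_prod_restrict_rpow_le hrq hrsq hcover
            (fun t x => a x ^ q * sectionNorm q (S t) a ((S t).restrict x) ^ (s - q))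
            (fun t g => sectionNorm q (S t) a g ^ s)
    _ = ∏ t ∈ T, mixedNorm s q (S t) a ^ r t := by
        rw [← prod_mul_distrib]
        refine prod_congr rfl fun t ht => ?_
        rw [← NNReal.rpow_add_of_nonneg _ (hrq t ht) (hrsq t ht), add_sub_cancel,
          ← NNReal.rpow_mul, mul_div_cancel₀ _ hs.ne']

theorem sum_rpow_rpow_one_div_le_prod_mixedNorm_rpow {w : τ → ℝ} {θ ρ : ℝ} (hs : 0 < s)
    (hsq : s ≤ q) (hρ : 0 < ρ) (hθ : 1 / ρ = θ / s + (1 - θ) / q) (hw : ∀ t ∈ T, 0 ≤ w t)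
    (hw_sum : ∑ t ∈ T, w t = 1) (hcover : ∀ j, ∑ t ∈ T with j ∈ S t, w t = θ)
    (a : (∀ j, α j) → ℝ≥0) :
    (∑ x, a x ^ ρ) ^ (1 / ρ) ≤ ∏ t ∈ T, mixedNorm s q (S t) a ^ w t := by
  have weights_cover (j : ι) :
      ∑ t ∈ T, w t * ρ / q + ∑ t ∈ T with j ∈ S t, (w t * ρ / s - w t * ρ / q) = 1 := by
    simp only [sum_sub_distrib, ← sum_div, ← sum_mul, hw_sum, hcover]
    calc _ = ρ * (θ / s + (1 - θ) / q) := by ring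
      _ = 1 := by rw [← hθ, mul_one_div_cancel hρ.ne']
  rw [one_div, NNReal.rpow_inv_le_iff hρ, ← NNReal.finsetProd_rpow]
  simpa only [← sum_mul, hw_sum, one_mul, NNReal.rpow_mul] using
    sum_rpow_sum_le_prod_mixedNorm_rpow hs hsq (fun t ht => mul_nonneg (hw t ht) hρ.le)
      weights_cover a

end MixedNorm

theorem sum_filter_mem_powersetCard_one_div_choose {ι : Type*} [Fintype ι] [DecidableEq ι] {k : ℕ}
    (hk : k ≤ Fintype.card ι) (j : ι) :
    ∑ S ∈ powersetCard k univ with j ∈ S, 1 / ((Fintype.card ι).choose k : ℝ) =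
      k / Fintype.card ι := by
  rcases k with _ | k
  · simp +contextual
  obtain ⟨n, hn⟩ := Nat.exists_eq_add_one.2 (hk.trans_lt' k.succ_pos)
  have card_containing : #{S ∈ powersetCard (k + 1) univ | j ∈ S} = n.choose k := by
    simpa [hn] using card_filter_powersetCard_subset {j} univ (k + 1) (subset_univ _) (by simp)
  have hC : ((n + 1).choose (k + 1) : ℝ) ≠ 0 := by
    exact_mod_cast (Nat.choose_pos (hn ▸ hk)).ne'
  rw [sum_const, card_containing, hn, nsmul_eq_mul, mul_one_div, div_eq_div_iff hC (by positivity)]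
  exact_mod_cast (mul_comm _ _).trans ((Nat.add_one_mul_choose_eq n k).trans (mul_comm _ _))

theorem blei_interpolation_general {ι : Type*} [Fintype ι] [DecidableEq ι] [Nonempty ι]
    {α : ι → Type*} [∀ j, Fintype (α j)] {k : ℕ} (hk : k ≤ Fintype.card ι) {s q ρ : ℝ}
    (hs : 0 < s) (hsq : s ≤ q)
    (hρ : (Fintype.card ι : ℝ) / ρ = k / s + (Fintype.card ι - k) / q)
    (a : (∀ j, α j) → ℝ≥0) :
    (∑ x, a x ^ ρ) ^ (1 / ρ) ≤
      ∏ S ∈ powersetCard k univ, mixedNorm s q S a ^ (1 / ((Fintype.card ι).choose k : ℝ)) := by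
  have hm : (0 : ℝ) < Fintype.card ι := by exact_mod_cast Fintype.card_pos
  have hC : (0 : ℝ) < (Fintype.card ι).choose k := by exact_mod_cast Nat.choose_pos hk
  have ρ_pos : 0 < ρ := by
    refine (div_pos_iff_of_pos_left hm).1 ?_
    calc 0 < (Fintype.card ι : ℝ) / q := div_pos hm (hs.trans_le hsq)
      _ = k / q + (Fintype.card ι - k) / q := by ring
      _ ≤ k / s + (Fintype.card ι - k) / q := by gcongr
      _ = Fintype.card ι / ρ := hρ.symm
  have hθ : 1 / ρ = (k / Fintype.card ι : ℝ) / s + (1 - k / Fintype.card ι) / q := by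
    calc 1 / ρ = Fintype.card ι / ρ / Fintype.card ι := by field_simp
      _ = _ := by
        rw [hρ]
        field_simp
  exact sum_rpow_rpow_one_div_le_prod_mixedNorm_rpow hs hsq ρ_pos hθ
    (fun _ _ => one_div_nonneg.2 hC.le) (by simp [hC.ne'])
    (sum_filter_mem_powersetCard_one_div_choose hk) a

/-- generalized Blei inequality, Bayart–Pellegrino–Seoane.
For `1 ≤ k ≤ m`, `1 ≤ s ≤ q` and `m/ρ = k/s + (m-k)/q`, every scalar array
`(a_i)_{i ∈ M(m,n)}` satisfies
`(∑_i |a_i|^ρ)^{1/ρ} ≤ ∏_{S ∈ P_k(m)} (∑_{i_S} (∑_{i_Ŝ} |a_i|^q)^{s/q})^{(1/s)(1/C(m,k))}`. -/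
theorem blei_interpolation {𝕜 : Type*} [RCLike 𝕜] (m n : ℕ) (hm : 0 < m) (hn : 0 < n)
    (k : ℕ) (hk1 : 1 ≤ k) (hkm : k ≤ m)
    (s q ρ : ℝ) (hs : 1 ≤ s) (hsq : s ≤ q)
    (hρ : (m : ℝ) / ρ = (k : ℝ) / s + ((m : ℝ) - k) / q)
    (a : (Fin m → Fin n) → 𝕜) :
    (∑ i : Fin m → Fin n, ‖a i‖ ^ ρ) ^ (1 / ρ) ≤
      ∏ S ∈ Finset.powersetCard k (Finset.univ : Finset (Fin m)),
        (∑ g : {j : Fin m // j ∈ S} → Fin n,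
          (∑ h : {j : Fin m // j ∉ S} → Fin n,
            ‖a (fun j => if hj : j ∈ S then g ⟨j, hj⟩ else h ⟨j, hj⟩)‖ ^ q) ^ (s / q))
          ^ ((1 / s) * (1 / (m.choose k : ℝ))) := by
  have : NeZero m := ⟨hm.ne'⟩
  simpa [mixedNorm_eq, ← NNReal.rpow_mul, ← NNReal.coe_le_coe] using
    blei_interpolation_general (by simpa using hkm) (zero_lt_one.trans_le hs) hsq
      (by simpa using hρ) (fun i => ‖a i‖₊)
end

section
/- Let m, n be positive integers and let s be a real number with 1 ≤ s ≤ 2. For every m-homogeneous polynomial P(z) = ∑_{|α|=m} a_α z^α on ℂ^n with complex coefficients, (∑_{|α|=m} |a_α|²)^{1/2} ≤ (2/s)^{m/2} · (∫_{𝕋^n} |P(z)|^s dμ^n(z))^{1/s}, where 𝕋^n = {z ∈ ℂ^n : |z_i| = 1 for all i} is the n-dimensional torus and μ^n is its normalized Haar measure. -/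
open Finset MeasureTheory

/-!
By Minkowski's inequality the estimate tensorizes, so it suffices to prove Weissler's one-variable
inequality: with `r² = s / 2`, the `L²` mean of a polynomial `p` over the circle of radius `r` is at
most its `Lˢ` mean over the unit circle. Reflecting the roots of `p` in the unit circle keeps `|p|`
on the circle and only increases it inside the disc, so `p` may be assumed to have no roots in the
open disc, where then `|p|² = exp (Re h)` with `h` holomorphic.

Let `u z = |p (r z)|²` on the unit circle, and let `P_r` be the Poisson semigroup. Gibbs'
variational principle for the density `P_r u`, together with the self-adjointness of `P_r`, reduces
the inequality to the contraction of entropy `Ent (P_r u) ≤ r² Ent u`. Writing `x log x` as a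
superposition of the functions `exp (-l x)` reduces this in turn to the case of `exp (-l Re G)` with
`G` holomorphic. There `exp (-l Re G) = |f|²` with `f = exp (-l G / 2)`, and since `f - f 0 = z g`
with `g` holomorphic and the circle means of `|g²|` increase with the radius, `⨍ |f|² - |f 0|²` over
the circle of radius `r` is at most `r²` times its value over the unit circle.
-/

namespace Bayart

section CircleAverage

open Metric Real

lemma continuous_uncurry_comp_circleMap {E : Type*} [TopologicalSpace E] {f : ℂ → ℂ → E}
    {c d : ℂ} {R S : ℝ}
    (hf : ContinuousOn (Function.uncurry f) (sphere c |R| ×ˢ sphere d |S|)) :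
    Continuous (Function.uncurry fun θ φ : ℝ ↦ f (circleMap c R θ) (circleMap d S φ)) :=
  hf.comp_continuous (f := fun p : ℝ × ℝ ↦ (circleMap c R p.1, circleMap d S p.2)) (by fun_prop)
    fun p ↦ ⟨circleMap_mem_sphere' c R p.1, circleMap_mem_sphere' d S p.2⟩

variable {E : Type*} [NormedAddCommGroup E] [NormedSpace ℝ E]

lemma circleAverage_eq_setIntegral (f : ℂ → E) (c : ℂ) (R : ℝ) :
    circleAverage f c R = (2 * π)⁻¹ • ∫ θ in Set.uIoc 0 (2 * π), f (circleMap c R θ) := by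
  rw [circleAverage_def, intervalIntegral.integral_of_le two_pi_pos.le,
    Set.uIoc_of_le two_pi_pos.le]

lemma circleIntegrable_circleAverage {f : ℂ → ℂ → E} {c d : ℂ} {R S : ℝ}
    (hf : ContinuousOn (Function.uncurry f) (sphere c |R| ×ˢ sphere d |S|)) :
    CircleIntegrable (fun z ↦ circleAverage (f z) d S) c R := by
  refine Continuous.intervalIntegrable (Continuous.const_smul ?_ _) _ _
  exact intervalIntegral.continuous_parametric_intervalIntegral_of_continuous'
    (continuous_uncurry_comp_circleMap hf) 0 (2 * π)

lemma circleAverage_comm {f : ℂ → ℂ → E} {c d : ℂ} {R S : ℝ}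
    (hf : ContinuousOn (Function.uncurry f) (sphere c |R| ×ˢ sphere d |S|)) :
    circleAverage (fun z ↦ circleAverage (f z) d S) c R =
      circleAverage (fun w ↦ circleAverage (f · w) c R) d S := by
  simp only [circleAverage_def, intervalIntegral.integral_smul]
  rw [intervalIntegral_intervalIntegral_swap, smul_comm]
  exact ((continuous_uncurry_comp_circleMap hf).continuousOn.integrableOn_compact
    (isCompact_uIcc.prod isCompact_uIcc)).mono_set
      (Set.prod_mono Set.uIoc_subset_uIcc Set.uIoc_subset_uIcc)

lemma norm_circleAverage_le (f : ℂ → E) (c : ℂ) (R : ℝ) :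
    ‖circleAverage f c R‖ ≤ circleAverage (fun z ↦ ‖f z‖) c R := by
  rw [circleAverage_def, circleAverage_def, norm_smul, Real.norm_of_nonneg (by positivity)]
  exact mul_le_mul_of_nonneg_left
    (intervalIntegral.norm_integral_le_integral_norm two_pi_pos.le) (by positivity)

lemma circleAverage_eq_circleAverage_mul (f : ℂ → E) (R : ℝ) :
    circleAverage f 0 R = circleAverage (fun z ↦ f (R * z)) 0 1 := by
  simp only [circleAverage_eq_circleAverage_zero_one (c := 0) (R := R), add_zero]

lemma circleAverage_const_mul (a : ℝ) (f : ℂ → ℝ) (c : ℂ) (R : ℝ) :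
    circleAverage (fun z ↦ a * f z) c R = a * circleAverage f c R := by
  simp only [← smul_eq_mul, circleAverage_fun_smul]

lemma circleAverage_mul_const (a : ℝ) (f : ℂ → ℝ) (c : ℂ) (R : ℝ) :
    circleAverage (fun z ↦ f z * a) c R = circleAverage f c R * a := by
  simp only [mul_comm _ a, circleAverage_const_mul]

lemma re_circleAverage {f : ℂ → ℂ} {c : ℂ} {R : ℝ} (hf : CircleIntegrable f c R) :
    (circleAverage f c R).re = circleAverage (fun z ↦ (f z).re) c R :=
  (Complex.reCLM.circleAverage_comp_comm hf).symm

end CircleAverage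

section Poisson

open Metric Real

lemma poissonKernel_mul_comm (r : ℝ) {z w : ℂ} (h : ‖z‖ = ‖w‖) :
    poissonKernel 0 (r * z) w = poissonKernel 0 (r * w) z := by
  have hdist : ‖w - r * z‖ ^ 2 = ‖z - r * w‖ ^ 2 := by
    have hsq : z.re * z.re + z.im * z.im = w.re * w.re + w.im * w.im := by
      rw [← Complex.normSq_apply, ← Complex.normSq_apply, Complex.normSq_eq_norm_sq,
        Complex.normSq_eq_norm_sq, h]
    simp only [← Complex.normSq_eq_norm_sq, Complex.normSq_apply, Complex.sub_re, Complex.sub_im,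
      Complex.re_ofReal_mul, Complex.im_ofReal_mul]
    linear_combination (r ^ 2 - 1) * hsq
  simp only [poissonKernel_def, sub_zero, norm_mul, h, hdist]

lemma mul_mem_ball {r : ℝ} (hr : |r| < 1) {z : ℂ} (hz : ‖z‖ ≤ 1) :
    (r * z : ℂ) ∈ ball (0 : ℂ) 1 := by
  rw [mem_ball_zero_iff, norm_mul, Complex.norm_real, Real.norm_eq_abs]
  exact (mul_le_of_le_one_right (abs_nonneg r) hz).trans_lt hr

lemma poissonKernel_nonneg {w z : ℂ} (hw : ‖w‖ ≤ ‖z‖) : 0 ≤ poissonKernel 0 w z := by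
  rw [poissonKernel_def, sub_zero, sub_zero]
  have : ‖w‖ ^ 2 ≤ ‖z‖ ^ 2 := by gcongr
  exact div_nonneg (sub_nonneg.2 this) (by positivity)

lemma continuousOn_poissonKernel :
    ContinuousOn (Function.uncurry (poissonKernel 0)) (ball (0 : ℂ) 1 ×ˢ sphere (0 : ℂ) 1) := by
  simp only [Function.uncurry_def, poissonKernel_def, sub_zero]
  refine ContinuousOn.div (by fun_prop) (by fun_prop) fun p hp ↦ ?_
  have hne : p.2 - p.1 ≠ 0 := by
    rintro h
    have hp1 := mem_ball_zero_iff.1 hp.1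
    rw [← sub_eq_zero.1 h, mem_sphere_zero_iff_norm.1 hp.2] at hp1
    exact lt_irrefl _ hp1
  positivity

variable {r : ℝ} {u v : ℂ → ℝ} {f F G : ℂ → ℂ} {w : ℂ}

lemma continuousOn_poissonKernel_mul (hr : |r| < 1) (hu : ContinuousOn u (sphere 0 1)) :
    ContinuousOn (Function.uncurry fun z w : ℂ ↦ poissonKernel 0 (r * z) w * u w)
      (sphere 0 |1| ×ˢ sphere 0 |1|) := by
  rw [abs_one]
  refine .mul ?_ (hu.comp continuousOn_snd fun p hp ↦ hp.2)
  exact continuousOn_poissonKernel.comp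
    (f := fun p : ℂ × ℂ ↦ ((r * p.1 : ℂ), p.2)) (by fun_prop)
    fun p hp ↦ ⟨mul_mem_ball hr (mem_sphere_zero_iff_norm.1 hp.1).le, hp.2⟩

lemma circleAverage_mul_poisson_comm (hr : |r| < 1)
    (hu : ContinuousOn u (sphere 0 1)) (hv : ContinuousOn v (sphere 0 1)) :
    circleAverage (fun z ↦ u z * circleAverage (fun w ↦ poissonKernel 0 (r * z) w * v w) 0 1) 0 1 =
      circleAverage (fun z ↦ circleAverage (fun w ↦ poissonKernel 0 (r * z) w * u w) 0 1 * v z)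
        0 1 := by
  have hcont : ContinuousOn
      (Function.uncurry fun z w : ℂ ↦ u z * (poissonKernel 0 (r * z) w * v w))
      (sphere 0 |1| ×ˢ sphere 0 |1|) :=
    (hu.comp continuousOn_fst fun p hp ↦ by simpa using hp.1).mul
      (continuousOn_poissonKernel_mul hr hv)
  simp only [← circleAverage_const_mul]
  rw [circleAverage_comm hcont]
  refine circleAverage_congr_sphere fun w hw ↦ ?_
  simp only [← circleAverage_mul_const]
  refine circleAverage_congr_sphere fun z hz ↦ ?_
  simp only [abs_one, mem_sphere_zero_iff_norm] at hw hz
  simp only [poissonKernel_mul_comm r (hz.trans hw.symm)]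
  ring

lemma continuousOn_sphere (hf : DiffContOnCl ℂ f (ball 0 1)) : ContinuousOn f (sphere 0 1) :=
  hf.continuousOn_ball.mono sphere_subset_closedBall

lemma continuousOn_poissonKernel_apply (hw : w ∈ ball (0 : ℂ) 1) :
    ContinuousOn (poissonKernel 0 w) (sphere 0 1) :=
  continuousOn_poissonKernel.comp (f := fun z : ℂ ↦ (w, z)) (by fun_prop) fun _ hz ↦ ⟨hw, hz⟩

lemma circleAverage_poissonKernel_mul_re (hF : DiffContOnCl ℂ F (ball 0 1))
    (hw : w ∈ ball (0 : ℂ) 1) :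
    circleAverage (fun z ↦ poissonKernel 0 w z * (F z).re) 0 1 = (F w).re := by
  have hint : CircleIntegrable (poissonKernel 0 w • F) 0 1 :=
    ((continuousOn_poissonKernel_apply hw).smul (continuousOn_sphere hF)).circleIntegrable
      zero_le_one
  rw [← hF.circleAverage_poissonKernel_smul hw, re_circleAverage hint]
  simp only [Pi.smul_apply', Complex.smul_re, smul_eq_mul]

lemma circleAverage_poissonKernel (hw : w ∈ ball (0 : ℂ) 1) :
    circleAverage (poissonKernel 0 w) 0 1 = 1 := by
  simpa using circleAverage_poissonKernel_mul_re (F := fun _ ↦ 1) diffContOnCl_const hw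

lemma circleAverage_re_mul_re_comm (hr : |r| < 1) (hF : DiffContOnCl ℂ F (ball 0 1))
    (hG : DiffContOnCl ℂ G (ball 0 1)) :
    circleAverage (fun z ↦ (F z).re * (G (r * z)).re) 0 1 =
      circleAverage (fun z ↦ (F (r * z)).re * (G z).re) 0 1 := by
  have hcont {H : ℂ → ℂ} (hH : DiffContOnCl ℂ H (ball 0 1)) :
      ContinuousOn (fun z ↦ (H z).re) (sphere 0 1) :=
    Complex.continuous_re.comp_continuousOn (continuousOn_sphere hH)
  have hpoisson {H : ℂ → ℂ} (hH : DiffContOnCl ℂ H (ball 0 1)) {z : ℂ} (hz : z ∈ sphere 0 |1|) :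
      (H (r * z)).re = circleAverage (fun w ↦ poissonKernel 0 (r * z) w * (H w).re) 0 1 :=
    (circleAverage_poissonKernel_mul_re hH
      (mul_mem_ball hr (by simpa using (mem_sphere_zero_iff_norm.1 hz).le))).symm
  calc _ = circleAverage (fun z ↦ (F z).re *
          circleAverage (fun w ↦ poissonKernel 0 (r * z) w * (G w).re) 0 1) 0 1 :=
        circleAverage_congr_sphere fun z hz ↦ by simp only [hpoisson hG hz]
    _ = circleAverage (fun z ↦
          circleAverage (fun w ↦ poissonKernel 0 (r * z) w * (F w).re) 0 1 * (G z).re) 0 1 :=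
        circleAverage_mul_poisson_comm hr (hcont hF) (hcont hG)
    _ = _ := circleAverage_congr_sphere fun z hz ↦ by simp only [hpoisson hF hz]

lemma re_pos_of_re_pos_sphere (hF : DiffContOnCl ℂ F (ball 0 1))
    (hpos : ∀ z ∈ sphere (0 : ℂ) 1, 0 < (F z).re) (hw : w ∈ ball (0 : ℂ) 1) : 0 < (F w).re := by
  obtain ⟨z₀, hz₀, hmin⟩ := (isCompact_sphere (0 : ℂ) 1).exists_isMinOn
    (NormedSpace.sphere_nonempty.2 zero_le_one)
    (Complex.continuous_re.comp_continuousOn (continuousOn_sphere hF))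
  have hG : DiffContOnCl ℂ (fun z ↦ F z - (F z₀).re) (ball 0 1) := hF.sub diffContOnCl_const
  have hnonneg : 0 ≤ circleAverage
      (fun z ↦ poissonKernel 0 w z * (F z - (F z₀).re).re) 0 1 := by
    refine circleAverage_nonneg_of_nonneg fun z hz ↦ ?_
    rw [abs_one] at hz
    refine mul_nonneg (poissonKernel_nonneg ?_) ?_
    · rw [mem_sphere_zero_iff_norm.1 hz]
      exact (mem_ball_zero_iff.1 hw).le
    · simpa using hmin hz
  rw [circleAverage_poissonKernel_mul_re hG hw, Complex.sub_re, Complex.ofReal_re] at hnonneg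
  linarith [hpos z₀ hz₀]

lemma norm_le_circleAverage_poissonKernel_mul (hf : DiffContOnCl ℂ f (ball 0 1))
    (hw : w ∈ ball (0 : ℂ) 1) :
    ‖f w‖ ≤ circleAverage (fun z ↦ poissonKernel 0 w z * ‖f z‖) 0 1 := by
  rw [← hf.circleAverage_poissonKernel_smul hw]
  refine (norm_circleAverage_le _ _ _).trans_eq (circleAverage_congr_sphere fun z hz ↦ ?_)
  rw [abs_one, mem_sphere_zero_iff_norm] at hz
  rw [mem_ball_zero_iff, ← hz] at hw
  simp only [Pi.smul_apply', norm_smul, Real.norm_of_nonneg (poissonKernel_nonneg hw.le)]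

lemma circleAverage_norm_le (hr : |r| < 1) (hf : DiffContOnCl ℂ f (ball 0 1)) :
    circleAverage (fun z ↦ ‖f z‖) 0 r ≤ circleAverage (fun z ↦ ‖f z‖) 0 1 := by
  have hcont := (continuousOn_sphere hf).norm
  have hdilate : CircleIntegrable (fun z ↦ ‖f (r * z)‖) 0 1 := by
    refine (hf.continuousOn_ball.comp (by fun_prop) fun z hz ↦ ?_).norm.circleIntegrable
      zero_le_one
    exact ball_subset_closedBall (mul_mem_ball hr (mem_sphere_zero_iff_norm.1 hz).le)
  rw [circleAverage_eq_circleAverage_mul]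
  calc circleAverage (fun z ↦ ‖f (r * z)‖) 0 1
      ≤ circleAverage
          (fun z ↦ circleAverage (fun w ↦ poissonKernel 0 (r * z) w * ‖f w‖) 0 1) 0 1 :=
        circleAverage_mono hdilate
          (circleIntegrable_circleAverage (continuousOn_poissonKernel_mul hr hcont))
          fun z hz ↦ norm_le_circleAverage_poissonKernel_mul hf
            (mul_mem_ball hr (by simpa using (mem_sphere_zero_iff_norm.1 hz).le))
    _ = circleAverage (fun z ↦
          circleAverage (fun w ↦ poissonKernel 0 (r * z) w * 1) 0 1 * ‖f z‖) 0 1 := by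
        simpa only [one_mul] using
          circleAverage_mul_poisson_comm (u := fun _ ↦ 1) hr continuousOn_const hcont
    _ = circleAverage (fun z ↦ ‖f z‖) 0 1 := circleAverage_congr_sphere fun z hz ↦ by
        simp only [mul_one, circleAverage_poissonKernel
          (mul_mem_ball hr (by simpa using (mem_sphere_zero_iff_norm.1 hz).le)), one_mul]

end Poisson

section Variance

open Metric Real

variable {r : ℝ} {f : ℂ → ℂ}

lemma circleAverage_norm_sub_center_sq {R : ℝ} (hf : DiffContOnCl ℂ f (ball 0 |R|)) :
    circleAverage (fun z ↦ ‖f z - f 0‖ ^ 2) 0 R =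
      circleAverage (fun z ↦ ‖f z‖ ^ 2) 0 R - ‖f 0‖ ^ 2 := by
  have hcont : ContinuousOn f (sphere 0 |R|) :=
    hf.continuousOn_ball.mono sphere_subset_closedBall
  have hexpand (z : ℂ) : ‖f z - f 0‖ ^ 2 =
      ‖f z‖ ^ 2 - 2 * (f z * (starRingEnd ℂ) (f 0)).re + ‖f 0‖ ^ 2 := by
    simp only [← Complex.normSq_eq_norm_sq, Complex.normSq_sub]
    ring
  have hmean : circleAverage (fun z ↦ (f z * (starRingEnd ℂ) (f 0)).re) 0 R = ‖f 0‖ ^ 2 := by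
    have hg : DiffContOnCl ℂ (fun z ↦ f z * (starRingEnd ℂ) (f 0)) (ball 0 |R|) :=
      hf.smul_const _
    rw [← re_circleAverage, hg.circleAverage, Complex.mul_conj, Complex.ofReal_re,
      Complex.normSq_eq_norm_sq]
    exact ContinuousOn.circleIntegrable' (by fun_prop)
  simp only [hexpand]
  rw [circleAverage_fun_add, circleAverage_fun_sub, circleAverage_const_mul, hmean,
    circleAverage_const]
  · ring
  all_goals exact ContinuousOn.circleIntegrable' (by fun_prop)

lemma circleAverage_norm_sub_center_sq_le (hr : |r| < 1) (hf : DiffContOnCl ℂ f (ball 0 1)) :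
    circleAverage (fun z ↦ ‖f z - f 0‖ ^ 2) 0 r ≤
      r ^ 2 * circleAverage (fun z ↦ ‖f z - f 0‖ ^ 2) 0 1 := by
  have hslope : DiffContOnCl ℂ (dslope f 0) (ball 0 1) :=
    .mk_ball
      ((Complex.differentiableOn_dslope (ball_mem_nhds 0 zero_lt_one)).2 hf.differentiableOn)
      ((continuousOn_dslope (closedBall_mem_nhds 0 zero_lt_one)).2
        ⟨hf.continuousOn_ball, hf.differentiableAt isOpen_ball (mem_ball_self zero_lt_one)⟩)
  have hfactor (z : ℂ) : ‖f z - f 0‖ ^ 2 = ‖z‖ ^ 2 * ‖dslope f 0 z ^ 2‖ := by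
    rw [norm_pow, ← mul_pow, ← norm_mul, ← smul_eq_mul, ← sub_smul_dslope f 0 z, sub_zero]
  have hcircle (R : ℝ) : circleAverage (fun z ↦ ‖f z - f 0‖ ^ 2) 0 R =
      R ^ 2 * circleAverage (fun z ↦ ‖dslope f 0 z ^ 2‖) 0 R := by
    rw [← circleAverage_const_mul]
    refine circleAverage_congr_sphere fun z hz ↦ ?_
    simp only [hfactor, mem_sphere_zero_iff_norm.1 hz, sq_abs]
  have hsq : DiffContOnCl ℂ (fun z ↦ dslope f 0 z ^ 2) (ball 0 1) := by
    simpa only [sq, smul_eq_mul] using hslope.smul hslope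
  rw [hcircle, hcircle 1, one_pow, one_mul]
  exact mul_le_mul_of_nonneg_left (circleAverage_norm_le hr hsq) (sq_nonneg r)

lemma circleAverage_norm_sq_sub_le (hr : |r| < 1) (hf : DiffContOnCl ℂ f (ball 0 1)) :
    circleAverage (fun z ↦ ‖f z‖ ^ 2) 0 r - ‖f 0‖ ^ 2 ≤
      r ^ 2 * (circleAverage (fun z ↦ ‖f z‖ ^ 2) 0 1 - ‖f 0‖ ^ 2) := by
  rw [← circleAverage_norm_sub_center_sq (hf.mono (ball_subset_ball hr.le)),
    ← circleAverage_norm_sub_center_sq (by simpa using hf)]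
  exact circleAverage_norm_sub_center_sq_le hr hf

end Variance

section Laplace

open Real Set

/-- The Laplace kernel `l⁻² (e^{-lx} - e^{-lm} + l (x - m) e^{-lm})`: the first-order Taylor
remainder of `x ↦ e^{-lx} / l²` at `m`. It writes the Bregman divergence of `x log x` as a
superposition of those of the exponentials `e^{-lx}`. -/
noncomputable def laplaceKernel (x m l : ℝ) : ℝ :=
  (exp (-(l * x)) - exp (-(l * m))) / l ^ 2 + (x - m) * exp (-(l * m)) / l

variable {x m l : ℝ}

lemma laplaceKernel_nonneg (hl : 0 < l) : 0 ≤ laplaceKernel x m l := by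
  have hkernel : laplaceKernel x m l =
      exp (-(l * m)) * (exp (-(l * (x - m))) - (-(l * (x - m)) + 1)) / l ^ 2 := by
    have hexp : exp (-(l * x)) = exp (-(l * m)) * exp (-(l * (x - m))) := by
      rw [← exp_add]
      ring_nf
    rw [laplaceKernel, hexp]
    field
  have hconvex := sub_nonneg.2 (add_one_le_exp (-(l * (x - m))))
  rw [hkernel]
  positivity

lemma measurable_laplaceKernel (m : ℝ) :
    Measurable fun p : ℝ × ℝ ↦ laplaceKernel p.1 m p.2 := by
  unfold laplaceKernel
  fun_prop

lemma integral_sub_mul_exp_neg_mul (hl : l ≠ 0) :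
    ∫ v in m..x, (x - v) * exp (-v * l) = laplaceKernel x m l := by
  have hderiv (v : ℝ) : HasDerivAt
      (fun v ↦ exp (-v * l) / l ^ 2 - (x - v) * (exp (-v * l) / l))
      ((x - v) * exp (-v * l)) v := by
    have hexp : HasDerivAt (fun v ↦ exp (-v * l)) (-l * exp (-v * l)) v :=
      ((hasDerivAt_neg v).mul_const l).exp.congr_deriv (by ring)
    refine ((hexp.div_const (l ^ 2)).sub
      (((hasDerivAt_id' v).const_sub x).mul (hexp.div_const l))).congr_deriv ?_
    field
  rw [intervalIntegral.integral_eq_sub_of_hasDerivAt (fun v _ ↦ hderiv v)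
    (by apply Continuous.intervalIntegrable; fun_prop), laplaceKernel]
  ring_nf

lemma intervalIntegrable_sub_mul_inv (hx : 0 < x) (hm : 0 < m) :
    IntervalIntegrable (fun v ↦ (x - v) * v⁻¹) volume m x := by
  refine ContinuousOn.intervalIntegrable ?_
  have hne (v) (hv : v ∈ uIcc m x) : v ≠ 0 := ((lt_min hm hx).trans_le hv.1).ne'
  fun_prop (disch := assumption)

lemma integral_sub_mul_inv (hx : 0 < x) (hm : 0 < m) :
    ∫ v in m..x, (x - v) * v⁻¹ = x * (log x - log m) - (x - m) := by
  have hderiv (v : ℝ) (hv : v ∈ uIcc m x) :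
      HasDerivAt (fun v ↦ x * log v - v) ((x - v) * v⁻¹) v := by
    have hv0 : v ≠ 0 := ((lt_min hm hx).trans_le hv.1).ne'
    refine (((hasDerivAt_log hv0).const_mul x).sub (hasDerivAt_id v)).congr_deriv ?_
    field
  rw [intervalIntegral.integral_eq_sub_of_hasDerivAt hderiv (intervalIntegrable_sub_mul_inv hx hm)]
  ring

lemma integral_Ioi_exp_neg_mul {v : ℝ} (hv : 0 < v) : ∫ l in Ioi 0, exp (-v * l) = v⁻¹ := by
  rw [integral_exp_mul_Ioi (neg_lt_zero.2 hv), mul_zero, exp_zero, neg_div_neg_eq, one_div]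

lemma integrable_sub_mul_exp_neg_mul (hx : 0 < x) (hm : 0 < m) :
    Integrable (Function.uncurry fun v l ↦ (x - v) * exp (-v * l))
      ((volume.restrict (uIoc m x)).prod (volume.restrict (Ioi 0))) := by
  have hpos : ∀ᵐ v ∂volume.restrict (uIoc m x), 0 < v :=
    ae_restrict_of_forall_mem measurableSet_uIoc fun v hv ↦ (lt_min hm hx).trans hv.1
  refine (integrable_prod_iff (by fun_prop)).2 ⟨?_, ?_⟩
  · filter_upwards [hpos] with v hv
    exact (integrableOn_exp_mul_Ioi (neg_lt_zero.2 hv) 0).const_mul (x - v)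
  · refine (intervalIntegrable_iff.1 (intervalIntegrable_sub_mul_inv hx hm)).norm.congr ?_
    filter_upwards [hpos] with v hv
    simp only [Function.uncurry, norm_mul, norm_of_nonneg (exp_pos _).le]
    rw [integral_const_mul, integral_Ioi_exp_neg_mul hv, norm_of_nonneg (inv_pos.2 hv).le]

lemma integrableOn_laplaceKernel (hx : 0 < x) (hm : 0 < m) :
    IntegrableOn (laplaceKernel x m) (Ioi 0) := by
  have hint : IntegrableOn (fun l ↦ ∫ v in m..x, (x - v) * exp (-v * l)) (Ioi 0) := by
    simp only [intervalIntegral.intervalIntegral_eq_integral_uIoc]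
    exact (integrable_sub_mul_exp_neg_mul hx hm).integral_prod_right.smul (_ : ℝ)
  exact hint.congr_fun (fun l hl ↦ integral_sub_mul_exp_neg_mul (ne_of_gt hl)) measurableSet_Ioi

lemma integral_laplaceKernel (hx : 0 < x) (hm : 0 < m) :
    ∫ l in Ioi 0, laplaceKernel x m l = x * (log x - log m) - (x - m) := by
  calc ∫ l in Ioi 0, laplaceKernel x m l
      = ∫ l in Ioi 0, ∫ v in m..x, (x - v) * exp (-v * l) :=
        setIntegral_congr_fun measurableSet_Ioi
          fun l hl ↦ (integral_sub_mul_exp_neg_mul (ne_of_gt hl)).symm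
    _ = ∫ v in m..x, ∫ l in Ioi 0, (x - v) * exp (-v * l) :=
        (intervalIntegral_integral_swap (integrable_sub_mul_exp_neg_mul hx hm)).symm
    _ = ∫ v in m..x, (x - v) * v⁻¹ := by
        refine intervalIntegral.integral_congr fun v hv ↦ ?_
        simp only [integral_const_mul, integral_Ioi_exp_neg_mul ((lt_min hm hx).trans_le hv.1)]
    _ = x * (log x - log m) - (x - m) := integral_sub_mul_inv hx hm

end Laplace

section Entropy

open Metric Real Set

/-- The entropy `⨍ u log u - (⨍ u) log (⨍ u)` of a positive function `u` with respect to the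
uniform probability measure on the circle with centre `c` and radius `R`. -/
noncomputable def circleEntropy (u : ℂ → ℝ) (c : ℂ) (R : ℝ) : ℝ :=
  circleAverage (fun z ↦ u z * log (u z)) c R - circleAverage u c R * log (circleAverage u c R)

variable {u v : ℂ → ℝ} {c : ℂ} {R : ℝ}

lemma circleEntropy_eq_circleEntropy_mul (u : ℂ → ℝ) (R : ℝ) :
    circleEntropy u 0 R = circleEntropy (fun z ↦ u (R * z)) 0 1 := by
  simp only [circleEntropy, circleAverage_eq_circleAverage_mul _ R]

lemma circleAverage_pos (hu : ContinuousOn u (sphere c |R|))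
    (hpos : ∀ z ∈ sphere c |R|, 0 < u z) : 0 < circleAverage u c R := by
  rw [circleAverage_def]
  refine smul_pos (by positivity)
    (intervalIntegral.intervalIntegral_pos_of_pos hu.circleIntegrable'
      (fun θ ↦ hpos _ (circleMap_mem_sphere' c R θ)) two_pi_pos)

lemma continuousOn_mul_log (hu : ContinuousOn u (sphere c |R|)) :
    ContinuousOn (fun z ↦ u z * log (u z)) (sphere c |R|) :=
  continuous_mul_log.comp_continuousOn hu

lemma circleAverage_laplaceKernel (hu : ContinuousOn u (sphere c |R|)) (l : ℝ) :
    circleAverage (fun z ↦ laplaceKernel (u z) (circleAverage u c R) l) c R =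
      (circleAverage (fun z ↦ exp (-(l * u z))) c R -
        exp (-(l * circleAverage u c R))) / l ^ 2 := by
  set A := circleAverage u c R
  have hkernel (z : ℂ) : laplaceKernel (u z) A l =
      (l ^ 2)⁻¹ * (exp (-(l * u z)) - exp (-(l * A))) + (exp (-(l * A)) / l) * (u z - A) := by
    rw [laplaceKernel]
    ring
  simp only [hkernel]
  rw [circleAverage_fun_add, circleAverage_const_mul, circleAverage_const_mul,
    circleAverage_fun_sub, circleAverage_fun_sub, circleAverage_const, circleAverage_const,
    sub_self]
  · ring
  all_goals exact ContinuousOn.circleIntegrable' (by fun_prop)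

lemma integral_laplaceKernel_eqOn (hu : ContinuousOn u (sphere c |R|))
    (hpos : ∀ z ∈ sphere c |R|, 0 < u z) :
    EqOn (fun z ↦ ∫ l in Ioi 0, laplaceKernel (u z) (circleAverage u c R) l)
      (fun z ↦ u z * log (u z) - u z * log (circleAverage u c R) - (u z - circleAverage u c R))
      (sphere c |R|) := fun z hz ↦ by
  simp only [integral_laplaceKernel (hpos z hz) (circleAverage_pos hu hpos)]
  ring

lemma circleAverage_integral_laplaceKernel (hu : ContinuousOn u (sphere c |R|))
    (hpos : ∀ z ∈ sphere c |R|, 0 < u z) :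
    circleAverage (fun z ↦ ∫ l in Ioi 0, laplaceKernel (u z) (circleAverage u c R) l) c R =
      circleEntropy u c R := by
  have hentropy := continuousOn_mul_log hu
  rw [circleAverage_congr_sphere (integral_laplaceKernel_eqOn hu hpos), circleAverage_fun_sub,
    circleAverage_fun_sub, circleAverage_fun_sub, circleAverage_mul_const, circleAverage_const,
    circleEntropy]
  · ring
  all_goals exact ContinuousOn.circleIntegrable' (by fun_prop)

lemma integrable_laplaceKernel_circleMap (hu : ContinuousOn u (sphere c |R|))
    (hpos : ∀ z ∈ sphere c |R|, 0 < u z) :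
    Integrable (Function.uncurry fun θ ↦ laplaceKernel (u (circleMap c R θ)) (circleAverage u c R))
      ((volume.restrict (uIoc 0 (2 * π))).prod (volume.restrict (Ioi 0))) := by
  have hmeas : Measurable fun θ ↦ u (circleMap c R θ) :=
    (hu.comp_continuous (continuous_circleMap c R) (circleMap_mem_sphere' c R)).measurable
  have hkernel := ((measurable_laplaceKernel (circleAverage u c R)).comp
    (hmeas.prodMap measurable_id)).aestronglyMeasurable
      (μ := (volume.restrict (uIoc 0 (2 * π))).prod (volume.restrict (Ioi 0)))
  refine (integrable_prod_iff hkernel).2 ⟨?_, ?_⟩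
  · exact .of_forall fun θ ↦ integrableOn_laplaceKernel (hpos _ (circleMap_mem_sphere' c R θ))
      (circleAverage_pos hu hpos)
  · have hentropy := continuousOn_mul_log hu
    have hint : CircleIntegrable (fun z ↦ u z * log (u z) - u z * log (circleAverage u c R) -
        (u z - circleAverage u c R)) c R := ContinuousOn.circleIntegrable' (by fun_prop)
    refine (intervalIntegrable_iff.1 hint).congr (.of_forall fun θ ↦ ?_)
    rw [← integral_laplaceKernel_eqOn hu hpos (circleMap_mem_sphere' c R θ)]
    exact setIntegral_congr_fun measurableSet_Ioi
      fun l hl ↦ (norm_of_nonneg (laplaceKernel_nonneg hl)).symm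

lemma integrableOn_circleAverage_exp_neg_sub (hu : ContinuousOn u (sphere c |R|))
    (hpos : ∀ z ∈ sphere c |R|, 0 < u z) :
    IntegrableOn (fun l ↦ (circleAverage (fun z ↦ exp (-(l * u z))) c R -
      exp (-(l * circleAverage u c R))) / l ^ 2) (Ioi 0) := by
  refine ((integrable_laplaceKernel_circleMap hu hpos).integral_prod_right.smul
    (2 * π)⁻¹).congr (.of_forall fun l ↦ ?_)
  exact (circleAverage_eq_setIntegral _ _ _).symm.trans (circleAverage_laplaceKernel hu l)

lemma circleEntropy_eq_integral (hu : ContinuousOn u (sphere c |R|))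
    (hpos : ∀ z ∈ sphere c |R|, 0 < u z) :
    circleEntropy u c R = ∫ l in Ioi 0, (circleAverage (fun z ↦ exp (-(l * u z))) c R -
      exp (-(l * circleAverage u c R))) / l ^ 2 := by
  rw [← circleAverage_integral_laplaceKernel hu hpos, circleAverage_def,
    intervalIntegral_integral_swap (integrable_laplaceKernel_circleMap hu hpos), ← integral_smul]
  exact integral_congr_ae (.of_forall fun l ↦ circleAverage_laplaceKernel hu l)

lemma circleAverage_re {F : ℂ → ℂ} (hF : DiffContOnCl ℂ F (ball 0 |R|)) :
    circleAverage (fun z ↦ (F z).re) 0 R = (F 0).re := by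
  rw [← re_circleAverage, hF.circleAverage]
  exact (hF.continuousOn_ball.mono sphere_subset_closedBall).circleIntegrable'

lemma circleAverage_exp_neg_re_sub_le {r : ℝ} (hr : |r| < 1) {F : ℂ → ℂ}
    (hF : DiffContOnCl ℂ F (ball 0 1)) (l : ℝ) :
    circleAverage (fun z ↦ exp (-(l * (F z).re))) 0 r - exp (-(l * (F 0).re)) ≤
      r ^ 2 * (circleAverage (fun z ↦ exp (-(l * (F z).re))) 0 1 - exp (-(l * (F 0).re))) := by
  have hnorm (z : ℂ) : exp (-(l * (F z).re)) = ‖Complex.exp (-(l / 2 : ℝ) * F z)‖ ^ 2 := by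
    rw [Complex.norm_exp, ← exp_nat_mul, ← Complex.ofReal_neg, Complex.re_ofReal_mul]
    ring_nf
  have hexp : DiffContOnCl ℂ (fun z ↦ Complex.exp (-(l / 2 : ℝ) * F z)) (ball 0 1) :=
    Complex.differentiable_exp.comp_diffContOnCl (hF.const_smul (-(l / 2 : ℝ) : ℂ))
  simp only [hnorm]
  exact circleAverage_norm_sq_sub_le hr hexp

lemma circleEntropy_re_le {r : ℝ} (hr : |r| < 1) {F : ℂ → ℂ} (hF : DiffContOnCl ℂ F (ball 0 1))
    (hpos : ∀ z ∈ sphere (0 : ℂ) 1, 0 < (F z).re) :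
    circleEntropy (fun z ↦ (F z).re) 0 r ≤ r ^ 2 * circleEntropy (fun z ↦ (F z).re) 0 1 := by
  have hcont (R : ℝ) (hR : |R| ≤ 1) : ContinuousOn (fun z ↦ (F z).re) (sphere 0 |R|) :=
    Complex.continuous_re.comp_continuousOn (hF.continuousOn_ball.mono
      (sphere_subset_closedBall.trans (closedBall_subset_closedBall hR)))
  have hposr (z : ℂ) (hz : z ∈ sphere 0 |r|) : 0 < (F z).re :=
    re_pos_of_re_pos_sphere hF hpos (by simpa [mem_sphere_zero_iff_norm.1 hz] using hr)
  have hpos1 (z : ℂ) (hz : z ∈ sphere 0 |1|) : 0 < (F z).re := hpos z (by simpa using hz)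
  have hcont1 := hcont 1 abs_one.le
  have hint1 := integrableOn_circleAverage_exp_neg_sub hcont1 hpos1
  have hintr := integrableOn_circleAverage_exp_neg_sub (hcont r hr.le) hposr
  rw [circleEntropy_eq_integral (hcont r hr.le) hposr, circleEntropy_eq_integral hcont1 hpos1,
    ← integral_const_mul]
  refine setIntegral_mono_on hintr (hint1.const_mul _) measurableSet_Ioi fun l _ ↦ ?_
  rw [circleAverage_re (hF.mono (ball_subset_ball hr.le)), circleAverage_re (by simpa using hF),
    ← mul_div_assoc]
  exact div_le_div_of_nonneg_right (circleAverage_exp_neg_re_sub_le hr hF l) (sq_nonneg l)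

lemma mul_sub_log_le_exp_sub {a : ℝ} (ha : 0 < a) (b : ℝ) : a * (b - log a) ≤ exp b - a := by
  have h := mul_le_mul_of_nonneg_left (add_one_le_exp (b - log a)) ha.le
  rw [exp_sub, exp_log ha, mul_div_cancel₀ _ ha.ne'] at h
  linarith

lemma circleAverage_mul_le_circleEntropy_add (hu : ContinuousOn u (sphere c |R|))
    (hpos : ∀ z ∈ sphere c |R|, 0 < u z) (hv : ContinuousOn v (sphere c |R|)) :
    circleAverage (fun z ↦ u z * v z) c R ≤ circleEntropy u c R +
      circleAverage u c R * log (circleAverage (fun z ↦ exp (v z)) c R) := by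
  set A := circleAverage u c R with hA
  set Z := circleAverage (fun z ↦ exp (v z)) c R with hZ
  have hA0 : 0 < A := circleAverage_pos hu hpos
  have hZ0 : 0 < Z := circleAverage_pos (by fun_prop) fun z _ ↦ exp_pos _
  have hentropy := continuousOn_mul_log hu
  have hpointwise (z : ℂ) (hz : z ∈ sphere c |R|) :
      u z * v z - u z * log (u z) - u z * (log Z - log A) ≤ exp (v z) * (A / Z) - u z := by
    have h := mul_sub_log_le_exp_sub (hpos z hz) (v z + (log A - log Z))
    rw [exp_add, exp_sub, exp_log hA0, exp_log hZ0] at h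
    linarith
  have hmono := circleAverage_mono (ContinuousOn.circleIntegrable' (by fun_prop))
    (ContinuousOn.circleIntegrable' (by fun_prop)) hpointwise
  rw [circleAverage_fun_sub, circleAverage_fun_sub, circleAverage_fun_sub,
    circleAverage_mul_const, circleAverage_mul_const, ← hA, ← hZ, mul_div_cancel₀ _ hZ0.ne',
    sub_self] at hmono
  · rw [circleEntropy, ← hA]
    linarith
  all_goals exact ContinuousOn.circleIntegrable' (by fun_prop)

end Entropy

section Weissler

open Metric Polynomial Real

variable {r : ℝ}

lemma circleAverage_re_mul_le_circleEntropy_add (hr : |r| < 1) {F : ℂ → ℂ} {v : ℂ → ℝ}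
    (hF : DiffContOnCl ℂ F (ball 0 1)) (hpos : ∀ z ∈ sphere (0 : ℂ) 1, 0 < (F z).re)
    (hv : ContinuousOn v (sphere 0 1)) :
    circleAverage (fun z ↦ (F (r * z)).re * v z) 0 1 ≤ circleEntropy (fun z ↦ (F z).re) 0 r +
      (F 0).re * log (circleAverage (fun z ↦ exp (v z)) 0 1) := by
  have hmem (z : ℂ) (hz : z ∈ sphere (0 : ℂ) |1|) : r * z ∈ ball (0 : ℂ) 1 :=
    mul_mem_ball hr (by simpa using hz : ‖z‖ = 1).le
  have hcont : ContinuousOn (fun z : ℂ ↦ (F (r * z)).re) (sphere 0 |1|) :=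
    Complex.continuous_re.comp_continuousOn
      (hF.differentiableOn.continuousOn.comp (by fun_prop) hmem)
  have hgibbs := circleAverage_mul_le_circleEntropy_add hcont
    (fun z hz ↦ re_pos_of_re_pos_sphere hF hpos (hmem z hz)) (by simpa using hv)
  have hmean : circleAverage (fun z ↦ (F (r * z)).re) 0 1 = (F 0).re := by
    rw [← circleAverage_eq_circleAverage_mul (fun z ↦ (F z).re),
      circleAverage_re (hF.mono (ball_subset_ball hr.le))]
  rwa [circleEntropy_eq_circleEntropy_mul, ← hmean]

lemma rpow_re_zero_le_circleAverage_exp (hr : |r| < 1) {F h : ℂ → ℂ}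
    (hF : DiffContOnCl ℂ F (ball 0 1)) (hh : DiffContOnCl ℂ h (ball 0 1))
    (hFh : ∀ z ∈ sphere (0 : ℂ) 1, (F z).re = exp (h (r * z)).re) :
    (F 0).re ^ (r ^ 2) ≤ circleAverage (fun z ↦ exp (r ^ 2 * (h z).re)) 0 1 := by
  set A := (F 0).re
  set Z := circleAverage (fun z ↦ exp (r ^ 2 * (h z).re)) 0 1
  have hpos (z : ℂ) (hz : z ∈ sphere 0 1) : 0 < (F z).re := hFh z hz ▸ exp_pos _
  have hA : 0 < A := re_pos_of_re_pos_sphere hF hpos (mem_ball_self zero_lt_one)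
  have hcont : ContinuousOn (fun z ↦ r ^ 2 * (h z).re) (sphere 0 1) :=
    (Complex.continuous_re.comp_continuousOn (continuousOn_sphere hh)).const_mul _
  have hZ : 0 < Z := circleAverage_pos (by simpa using hcont.rexp) fun z _ ↦ exp_pos _
  have hduality := circleAverage_re_mul_le_circleEntropy_add hr hF hpos hcont
  have hadjoint : circleAverage (fun z ↦ (F (r * z)).re * (r ^ 2 * (h z).re)) 0 1 =
      r ^ 2 * circleAverage (fun z ↦ (F z).re * log (F z).re) 0 1 := by
    simp only [mul_left_comm _ (r ^ 2), circleAverage_const_mul,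
      ← circleAverage_re_mul_re_comm hr hF hh]
    congr 1
    refine circleAverage_congr_sphere fun z hz ↦ ?_
    simp only [hFh z (by simpa using hz), log_exp]
  have hcontraction := circleEntropy_re_le hr hF hpos
  have hentropy : circleEntropy (fun z ↦ (F z).re) 0 1 =
      circleAverage (fun z ↦ (F z).re * log (F z).re) 0 1 - A * log A := by
    rw [circleEntropy, circleAverage_re (by simpa using hF)]
  have hlog : log A * r ^ 2 ≤ log Z := by
    refine le_of_mul_le_mul_left ?_ hA
    rw [hentropy] at hcontraction
    linarith
  rw [rpow_def_of_pos hA]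
  exact (le_log_iff_exp_le hZ).1 hlog

lemma exists_re_eval_eq_re_mul_conj (p q : ℂ[X]) :
    ∃ F : ℂ[X], ∀ z : ℂ, ‖z‖ = 1 →
      (F.eval z).re = (p.eval z * (starRingEnd ℂ) (q.eval z)).re := by
  induction p using Polynomial.induction_on' with
  | add p₁ p₂ h₁ h₂ =>
    obtain ⟨F₁, hF₁⟩ := h₁
    obtain ⟨F₂, hF₂⟩ := h₂
    exact ⟨F₁ + F₂, fun z hz ↦ by simp only [eval_add, Complex.add_re, hF₁ z hz, hF₂ z hz, add_mul]⟩
  | monomial j a =>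
    induction q using Polynomial.induction_on' with
    | add q₁ q₂ h₁ h₂ =>
      obtain ⟨F₁, hF₁⟩ := h₁
      obtain ⟨F₂, hF₂⟩ := h₂
      exact ⟨F₁ + F₂, fun z hz ↦ by
        simp only [eval_add, Complex.add_re, hF₁ z hz, hF₂ z hz, map_add, mul_add]⟩
    | monomial k b =>
      have hconj {z : ℂ} (hz : ‖z‖ = 1) (i : ℕ) : (starRingEnd ℂ) z ^ i * z ^ i = 1 := by
        rw [← mul_pow, mul_comm, Complex.mul_conj, Complex.normSq_eq_norm_sq, hz]
        simp
      obtain ⟨d, rfl⟩ | ⟨d, rfl⟩ := (le_total k j).imp Nat.exists_eq_add_of_le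
        Nat.exists_eq_add_of_le
      · refine ⟨monomial d (a * (starRingEnd ℂ) b), fun z hz ↦ ?_⟩
        simp only [eval_monomial, map_mul, map_pow]
        congr 1
        linear_combination (-(a * (starRingEnd ℂ) b * z ^ d)) * hconj hz k
      · refine ⟨monomial d ((starRingEnd ℂ) a * b), fun z hz ↦ ?_⟩
        rw [← Complex.conj_re (_ * _)]
        simp only [eval_monomial, map_mul, map_pow, Complex.conj_conj]
        congr 1
        linear_combination (-((starRingEnd ℂ) a * b * z ^ d)) * hconj hz j

lemma exists_exp_eq_of_ne_zero {R : ℝ} (hR : 0 < R) {f : ℂ → ℂ}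
    (hf : DifferentiableOn ℂ f (ball 0 R)) (hf0 : ∀ z ∈ ball (0 : ℂ) R, f z ≠ 0) :
    ∃ h : ℂ → ℂ, DifferentiableOn ℂ h (ball 0 R) ∧
      ∀ z ∈ ball (0 : ℂ) R, Complex.exp (h z) = f z := by
  have hlogDeriv : DifferentiableOn ℂ (fun z ↦ deriv f z / f z) (ball 0 R) :=
    (hf.deriv isOpen_ball).div hf hf0
  obtain ⟨h, hh0, hh⟩ := hlogDeriv.isExactOn_ball.with_val_at 0 (Complex.log (f 0))
  have hdiff : DifferentiableOn ℂ h (ball 0 R) :=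
    fun z hz ↦ (hh z hz).differentiableAt.differentiableWithinAt
  refine ⟨h, hdiff, fun z hz ↦ ?_⟩
  have hquotient (w : ℂ) (hw : w ∈ ball (0 : ℂ) R) :
      HasDerivAt (fun w ↦ f w * Complex.exp (-h w)) 0 w := by
    have hfw := (hf.differentiableAt (isOpen_ball.mem_nhds hw)).hasDerivAt
    refine (hfw.fun_mul (hh w hw).fun_neg.cexp).congr_deriv ?_
    have := hf0 w hw
    field
  have hconst := isOpen_ball.is_const_of_deriv_eq_zero (convex_ball (0 : ℂ) R).isPreconnected
    (fun w hw ↦ (hquotient w hw).differentiableAt.differentiableWithinAt)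
    (fun w hw ↦ (hquotient w hw).deriv) hz (mem_ball_self hR)
  simp only [hh0, Complex.exp_neg, Complex.exp_log (hf0 0 (mem_ball_self hR)),
    mul_inv_cancel₀ (hf0 0 (mem_ball_self hR))] at hconst
  exact (eq_of_mul_inv_eq_one hconst).symm

lemma rpow_circleAverage_le_of_forall_ball_ne_zero (hr : |r| < 1) {q : ℂ[X]} {R : ℝ} (hR : 1 < R)
    (hq : ∀ z ∈ ball (0 : ℂ) R, q.eval z ≠ 0) :
    circleAverage (fun z ↦ ‖q.eval z‖ ^ 2) 0 r ^ (r ^ 2) ≤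
      circleAverage (fun z ↦ ‖q.eval z‖ ^ (2 * r ^ 2)) 0 1 := by
  obtain ⟨h, hdiff, hexp⟩ := exists_exp_eq_of_ne_zero (zero_lt_one.trans hR)
    q.differentiable.differentiableOn hq
  obtain ⟨F, hF⟩ := exists_re_eval_eq_re_mul_conj (q.comp (C (r : ℂ) * X))
    (q.comp (C (r : ℂ) * X))
  have hFnorm (z : ℂ) (hz : ‖z‖ = 1) : (F.eval z).re = ‖q.eval (r * z)‖ ^ 2 := by
    rw [hF z hz, Complex.mul_conj, Complex.ofReal_re, Complex.normSq_eq_norm_sq]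
    simp
  have hball {z : ℂ} (hz : ‖z‖ ≤ 1) : z ∈ ball (0 : ℂ) R := by simpa using hz.trans_lt hR
  have hnorm {z : ℂ} (hz : ‖z‖ ≤ 1) : ‖q.eval z‖ = exp (h z).re := by
    rw [← hexp z (hball hz), Complex.norm_exp]
  have hh : DiffContOnCl ℂ (fun z ↦ 2 * h z) (ball 0 1) :=
    ((hdiff.mono fun z hz ↦ hball (by simpa using hz)).diffContOnCl_ball subset_rfl).const_smul
      (2 : ℂ)
  have htwo (z : ℂ) : (2 * h z).re = 2 * (h z).re := by simp
  have hmean : circleAverage (fun z ↦ ‖q.eval z‖ ^ 2) 0 r = (F.eval 0).re := by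
    rw [← circleAverage_re F.differentiable.diffContOnCl (R := 1),
      circleAverage_eq_circleAverage_mul]
    exact circleAverage_congr_sphere fun z hz ↦ (hFnorm z (by simpa using hz)).symm
  have hrpow : circleAverage (fun z ↦ ‖q.eval z‖ ^ (2 * r ^ 2)) 0 1 =
      circleAverage (fun z ↦ exp (r ^ 2 * (2 * h z).re)) 0 1 := by
    refine circleAverage_congr_sphere fun z hz ↦ ?_
    simp only [hnorm (by simpa using hz : ‖z‖ = 1).le, ← exp_mul, htwo]
    ring_nf
  rw [hmean, hrpow]
  refine rpow_re_zero_le_circleAverage_exp hr F.differentiable.diffContOnCl hh fun z hz ↦ ?_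
  have hz : ‖z‖ = 1 := by simpa using hz
  rw [hFnorm z hz, hnorm (mem_ball_zero_iff.1 (mul_mem_ball hr hz.le)).le, ← exp_nat_mul,
    htwo]
  norm_cast

lemma rpow_circleAverage_le_of_forall_ball_one_ne_zero (hr : |r| < 1) {q : ℂ[X]}
    (hq : ∀ z ∈ ball (0 : ℂ) 1, q.eval z ≠ 0) :
    circleAverage (fun z ↦ ‖q.eval z‖ ^ 2) 0 r ^ (r ^ 2) ≤
      circleAverage (fun z ↦ ‖q.eval z‖ ^ (2 * r ^ 2)) 0 1 := by
  have hdilate (η : ℝ) (hη0 : 0 < η) (hη1 : η < 1) :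
      circleAverage (fun z ↦ ‖q.eval z‖ ^ 2) 0 (η * r) ^ (r ^ 2) ≤
        circleAverage (fun z ↦ ‖q.eval z‖ ^ (2 * r ^ 2)) 0 η := by
    have hdilated := rpow_circleAverage_le_of_forall_ball_ne_zero hr
      (q := q.comp (C (η : ℂ) * X)) (one_lt_inv_iff₀.2 ⟨hη0, hη1⟩) fun z hz ↦ by
        rw [eval_comp, eval_mul, eval_C, eval_X]
        refine hq _ ?_
        rw [mem_ball_zero_iff] at hz ⊢
        rwa [norm_mul, Complex.norm_real, norm_of_nonneg hη0.le, ← lt_inv_mul_iff₀ hη0, mul_one]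
    simp only [eval_comp, eval_mul, eval_C, eval_X] at hdilated
    rw [circleAverage_eq_circleAverage_mul] at hdilated ⊢
    rw [circleAverage_eq_circleAverage_mul _ η]
    simpa only [Complex.ofReal_mul, mul_assoc] using hdilated
  have hleft : Continuous fun η : ℝ ↦
      circleAverage (fun z ↦ ‖q.eval z‖ ^ 2) 0 (η * r) ^ (r ^ 2) :=
    (((q.continuous.norm.pow 2).circleAverage (c := 0)).comp (by fun_prop)).rpow_const
      fun _ ↦ .inr (sq_nonneg r)
  have hright : Continuous fun η : ℝ ↦ circleAverage (fun z ↦ ‖q.eval z‖ ^ (2 * r ^ 2)) 0 η :=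
    (q.continuous.norm.rpow_const fun _ ↦ .inr (by positivity)).circleAverage
  have hlimit := le_of_tendsto_of_tendsto (hleft.continuousWithinAt (s := Set.Iio 1) (x := 1))
    (hright.continuousWithinAt (s := Set.Iio 1) (x := 1))
    (Filter.mem_of_superset (Ioo_mem_nhdsLT zero_lt_one) fun η hη ↦ hdilate η hη.1 hη.2)
  simpa only [one_mul] using hlimit

/-- The linear polynomial with the modulus of `X - a` on the unit circle and no root in the open
unit disc: a root `a` inside the disc is reflected to `1 / conj a`. -/
noncomputable def outerFactor (a : ℂ) : ℂ[X] :=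
  if ‖a‖ < 1 then 1 - C ((starRingEnd ℂ) a) * X else X - C a

/-- The outer part of `p`, up to a unimodular constant: the polynomial with the modulus of `p` on
the unit circle and no root in the open unit disc. -/
noncomputable def outerPart (p : ℂ[X]) : ℂ[X] :=
  C p.leadingCoeff * (p.roots.map outerFactor).prod

variable {a z : ℂ}

lemma eval_outerFactor_ne_zero (hz : ‖z‖ < 1) : (outerFactor a).eval z ≠ 0 := by
  rw [outerFactor]
  split_ifs with ha
  · have hlt : ‖(starRingEnd ℂ) a * z‖ < 1 := by
      rw [norm_mul, Complex.norm_conj]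
      exact mul_lt_one_of_nonneg_of_lt_one_left (norm_nonneg a) ha hz.le
    simp only [eval_sub, eval_one, eval_mul, eval_C, eval_X, ne_eq, sub_eq_zero]
    intro h
    simp [← h] at hlt
  · simp only [eval_sub, eval_X, eval_C, ne_eq, sub_eq_zero]
    rintro rfl
    exact ha hz

lemma norm_one_sub_conj_mul_sq (a z : ℂ) :
    ‖1 - (starRingEnd ℂ) a * z‖ ^ 2 =
      ‖z - a‖ ^ 2 + (1 - ‖z‖ ^ 2) * (1 - ‖a‖ ^ 2) := by
  simp only [← Complex.normSq_eq_norm_sq, Complex.normSq_apply, Complex.sub_re, Complex.sub_im,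
    Complex.one_re, Complex.one_im, Complex.mul_re, Complex.mul_im, Complex.conj_re,
    Complex.conj_im]
  ring

lemma norm_sub_le_norm_eval_outerFactor (hz : ‖z‖ ≤ 1) :
    ‖z - a‖ ≤ ‖(outerFactor a).eval z‖ := by
  rw [outerFactor]
  split_ifs with ha
  · refine le_of_sq_le_sq ?_ (norm_nonneg _)
    simp only [eval_sub, eval_one, eval_mul, eval_C, eval_X, norm_one_sub_conj_mul_sq]
    exact le_add_of_nonneg_right (mul_nonneg (sub_nonneg.2 (pow_le_one₀ (norm_nonneg z) hz))
      (sub_nonneg.2 (pow_le_one₀ (norm_nonneg a) ha.le)))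
  · simp

lemma norm_eval_outerFactor (hz : ‖z‖ = 1) : ‖(outerFactor a).eval z‖ = ‖z - a‖ := by
  rw [outerFactor]
  split_ifs
  · rw [← sq_eq_sq₀ (norm_nonneg _) (norm_nonneg _)]
    simp [norm_one_sub_conj_mul_sq, hz]
  · simp

variable {p : ℂ[X]}

lemma norm_multisetProd (S : Multiset ℂ) : ‖S.prod‖ = (S.map norm).prod :=
  map_multiset_prod (normHom (α := ℂ)) S

lemma norm_eval_eq_prod_roots (p : ℂ[X]) (z : ℂ) :
    ‖p.eval z‖ = ‖p.leadingCoeff‖ * (p.roots.map fun a ↦ ‖z - a‖).prod := by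
  rw [(IsAlgClosed.splits p).eval_eq_prod_roots, norm_mul, norm_multisetProd, Multiset.map_map]
  rfl

lemma norm_eval_outerPart_eq_prod (p : ℂ[X]) (z : ℂ) :
    ‖(outerPart p).eval z‖ =
      ‖p.leadingCoeff‖ * (p.roots.map fun a ↦ ‖(outerFactor a).eval z‖).prod := by
  rw [outerPart, eval_mul, eval_C, norm_mul, eval_multiset_prod, norm_multisetProd,
    Multiset.map_map, Multiset.map_map]
  rfl

lemma eval_outerPart_ne_zero (hp : p ≠ 0) (hz : ‖z‖ < 1) : (outerPart p).eval z ≠ 0 := by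
  rw [← norm_ne_zero_iff, norm_eval_outerPart_eq_prod]
  refine mul_ne_zero (by simpa using hp) (Multiset.prod_ne_zero fun h ↦ ?_)
  obtain ⟨a, -, ha⟩ := Multiset.mem_map.1 h
  exact eval_outerFactor_ne_zero hz (norm_eq_zero.1 ha)

lemma norm_eval_le_norm_eval_outerPart (hz : ‖z‖ ≤ 1) :
    ‖p.eval z‖ ≤ ‖(outerPart p).eval z‖ := by
  rw [norm_eval_eq_prod_roots, norm_eval_outerPart_eq_prod]
  exact mul_le_mul_of_nonneg_left (Multiset.prod_map_le_prod_map₀ _ _ (fun a _ ↦ norm_nonneg _)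
    fun a _ ↦ norm_sub_le_norm_eval_outerFactor hz) (norm_nonneg _)

lemma norm_eval_outerPart (hz : ‖z‖ = 1) : ‖(outerPart p).eval z‖ = ‖p.eval z‖ := by
  simp only [norm_eval_eq_prod_roots p, norm_eval_outerPart_eq_prod, norm_eval_outerFactor hz]

theorem rpow_circleAverage_norm_eval_le (p : ℂ[X]) (hr : |r| ≤ 1) :
    circleAverage (fun z ↦ ‖p.eval z‖ ^ 2) 0 r ^ (r ^ 2) ≤
      circleAverage (fun z ↦ ‖p.eval z‖ ^ (2 * r ^ 2)) 0 1 := by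
  obtain hr | hr := hr.eq_or_lt
  · have hr2 : r ^ 2 = 1 := by rw [← sq_abs, hr, one_pow]
    rw [← circleAverage_abs_radius, hr, hr2]
    norm_num
  obtain rfl | hp := eq_or_ne p 0
  · obtain rfl | hr0 := eq_or_ne r 0
    · simp [circleAverage_const]
    · simp [circleAverage_const, zero_rpow, hr0]
  calc circleAverage (fun z ↦ ‖p.eval z‖ ^ 2) 0 r ^ (r ^ 2)
      ≤ circleAverage (fun z ↦ ‖(outerPart p).eval z‖ ^ 2) 0 r ^ (r ^ 2) := by
        refine rpow_le_rpow (circleAverage_nonneg_of_nonneg fun z _ ↦ by positivity)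
          (circleAverage_mono ?_ ?_ fun z hz ↦ ?_) (sq_nonneg r)
        · exact (p.continuous.norm.pow 2).continuousOn.circleIntegrable'
        · exact ((outerPart p).continuous.norm.pow 2).continuousOn.circleIntegrable'
        · have hz : ‖z‖ ≤ 1 := (mem_sphere_zero_iff_norm.1 hz).trans_le hr.le
          exact pow_le_pow_left₀ (norm_nonneg _) (norm_eval_le_norm_eval_outerPart hz) 2
    _ ≤ circleAverage (fun z ↦ ‖(outerPart p).eval z‖ ^ (2 * r ^ 2)) 0 1 :=
        rpow_circleAverage_le_of_forall_ball_one_ne_zero hr fun z hz ↦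
          eval_outerPart_ne_zero hp (by simpa using hz)
    _ = circleAverage (fun z ↦ ‖p.eval z‖ ^ (2 * r ^ 2)) 0 1 :=
        circleAverage_congr_sphere fun z hz ↦ by
          simp only [norm_eval_outerPart (by simpa using hz : ‖z‖ = 1)]

end Weissler

section Parseval

open Polynomial Real

lemma integral_Icc_exp_two_pi_eq_circleAverage {E : Type*} [NormedAddCommGroup E]
    [NormedSpace ℝ E] (f : ℂ → E) :
    ∫ t in Set.Icc (0 : ℝ) 1, f (Complex.exp ((2 * π * t : ℝ) * Complex.I)) =
      circleAverage f 0 1 := by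
  rw [integral_Icc_eq_integral_Ioc, ← intervalIntegral.integral_of_le zero_le_one,
    circleAverage_def]
  simpa [circleMap] using intervalIntegral.integral_comp_mul_left
    (fun θ ↦ f (circleMap 0 1 θ)) two_pi_pos.ne' (a := 0) (b := 1)

lemma circleAverage_norm_sum_sq {N : ℕ} (a : Fin N → ℂ) (r : ℝ) :
    circleAverage (fun z ↦ ‖∑ k, a k * z ^ (k : ℕ)‖ ^ 2) 0 r =
      ∑ k : Fin N, (r ^ 2) ^ (k : ℕ) * ‖a k‖ ^ 2 := by
  set p : ℂ[X] := ∑ k : Fin N, C (a k * r ^ (k : ℕ)) * X ^ (k : ℕ)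
  have hcoeff (k : Fin N) : p.coeff k = a k * r ^ (k : ℕ) := by
    simp only [p, finsetSum_coeff, coeff_C_mul_X_pow, Fin.val_inj, sum_ite_eq, mem_univ, if_true]
  have heval (z : ℂ) : p.eval z = ∑ k, a k * (r * z) ^ (k : ℕ) := by
    simp only [p, eval_finsetSum, eval_mul, eval_C, eval_pow, eval_X, mul_pow, mul_assoc]
  rw [circleAverage_eq_circleAverage_mul]
  simp only [← heval]
  rw [← sum_sq_norm_coeff_eq_circleAverage]
  refine (sum_fin (fun _ c ↦ ‖c‖ ^ 2) (by simp) (degree_sum_fin_lt _)).symm.trans ?_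
  refine sum_congr rfl fun k _ ↦ ?_
  rw [hcoeff, norm_mul, norm_pow, Complex.norm_real, mul_pow, norm_eq_abs, pow_right_comm, sq_abs,
    mul_comm]

theorem rpow_sum_le_integral_norm_rpow {s : ℝ} (hs0 : 0 < s) (hs2 : s ≤ 2) {N : ℕ}
    (a : Fin N → ℂ) :
    (∑ k : Fin N, (s / 2) ^ (k : ℕ) * ‖a k‖ ^ 2) ^ (s / 2) ≤
      ∫ t in Set.Icc (0 : ℝ) 1,
        ‖∑ k, a k * Complex.exp ((2 * π * t : ℝ) * Complex.I) ^ (k : ℕ)‖ ^ s := by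
  have hr2 : √(s / 2) ^ 2 = s / 2 := sq_sqrt (by positivity)
  have hr : |√(s / 2)| ≤ 1 := by
    rw [abs_of_nonneg (sqrt_nonneg _), sqrt_le_one]
    linarith
  have hweissler := rpow_circleAverage_norm_eval_le (∑ k, C (a k) * X ^ (k : ℕ)) hr
  simp only [eval_finsetSum, eval_mul, eval_C, eval_pow, eval_X] at hweissler
  rw [circleAverage_norm_sum_sq, hr2, mul_div_cancel₀ s two_ne_zero] at hweissler
  rwa [integral_Icc_exp_two_pi_eq_circleAverage (fun z ↦ ‖∑ k, a k * z ^ (k : ℕ)‖ ^ s)]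

end Parseval

section Minkowski

variable {ι X E : Type*} [Fintype ι] [MeasurableSpace X] {μ : Measure X} [NormedAddCommGroup E]

lemma rpow_sum_integral_rpow_le {g : ι → X → ℝ} (hg : ∀ k, Integrable (g k) μ)
    (hg0 : ∀ k x, 0 ≤ g k x) {p : ℝ} (hp : 1 ≤ p) :
    (∑ k, (∫ x, g k x ∂μ) ^ p) ^ (1 / p) ≤ ∫ x, (∑ k, g k x ^ p) ^ (1 / p) ∂μ := by
  have : Fact (1 ≤ ENNReal.ofReal p) := ⟨by simpa using hp⟩
  have hp0 : 0 < p := zero_lt_one.trans_le hp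
  have hnorm (v : PiLp (ENNReal.ofReal p) fun _ : ι ↦ ℝ) (hv : ∀ k, 0 ≤ v k) :
      ‖v‖ = (∑ k, v k ^ p) ^ (1 / p) := by
    have htoReal : (ENNReal.ofReal p).toReal = p := ENNReal.toReal_ofReal hp0.le
    simp only [PiLp.norm_eq_sum (htoReal.symm ▸ hp0), htoReal, Real.norm_of_nonneg (hv _)]
  set G : X → PiLp (ENNReal.ofReal p) fun _ : ι ↦ ℝ := fun x ↦ WithLp.toLp _ fun k ↦ g k x
  have hG (k : ι) : (∫ x, G x ∂μ) k = ∫ x, g k x ∂μ := eval_integral_piLp hg k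
  have hnormG (x : X) : ‖G x‖ = (∑ k, g k x ^ p) ^ (1 / p) := hnorm (G x) fun k ↦ hg0 k x
  have hnormInt : ‖∫ x, G x ∂μ‖ = (∑ k, (∫ x, g k x ∂μ) ^ p) ^ (1 / p) := by
    rw [hnorm _ fun k ↦ (hG k).symm ▸ integral_nonneg (hg0 k)]
    simp only [hG]
  simpa only [hnormInt, hnormG] using norm_integral_le_integral_norm (μ := μ) G

lemma rpow_sum_mul_integral_norm_rpow_le {s q : ℝ} (hs : 0 < s) (hsq : s ≤ q) {w : ι → ℝ}
    (hw : ∀ k, 0 ≤ w k) {f : ι → X → E} (hf : ∀ k, Integrable (fun x ↦ ‖f k x‖ ^ s) μ) :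
    (∑ k, w k * (∫ x, ‖f k x‖ ^ s ∂μ) ^ (q / s)) ^ (s / q) ≤
      ∫ x, (∑ k, w k * ‖f k x‖ ^ q) ^ (s / q) ∂μ := by
  have hq : 0 < q := hs.trans_le hsq
  have hweight (k : ι) {y : ℝ} (hy : 0 ≤ y) :
      (w k ^ (s / q) * y) ^ (q / s) = w k * y ^ (q / s) := by
    rw [Real.mul_rpow (Real.rpow_nonneg (hw k) _) hy, ← Real.rpow_mul (hw k),
      div_mul_div_cancel₀ hq.ne', div_self hs.ne', Real.rpow_one]
  have hpow (k : ι) (x : X) : (‖f k x‖ ^ s) ^ (q / s) = ‖f k x‖ ^ q := by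
    rw [← Real.rpow_mul (norm_nonneg _), mul_div_cancel₀ q hs.ne']
  have hminkowski := rpow_sum_integral_rpow_le (fun k ↦ (hf k).const_mul (w k ^ (s / q)))
    (fun k x ↦ mul_nonneg (Real.rpow_nonneg (hw k) _) (by positivity)) ((one_le_div hs).2 hsq)
  have hint (k : ι) : 0 ≤ ∫ x, ‖f k x‖ ^ s ∂μ := integral_nonneg fun x ↦ by positivity
  simpa only [integral_const_mul, hweight _ (hint _),
    hweight _ (Real.rpow_nonneg (norm_nonneg _) s), hpow, one_div_div] using hminkowski

end Minkowski

section Tensor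

variable {ι X 𝕜 : Type*} [Fintype ι] [NormedField 𝕜] {n : ℕ}

/-- The element `∑ α, a α • φ_{α 1} ⊗ ⋯ ⊗ φ_{α n}` of the `n`-fold tensor power of the span of
the functions `φ k`, as a function of `n` variables. -/
def tensorSum (φ : ι → X → 𝕜) (a : (Fin n → ι) → 𝕜) (t : Fin n → X) : 𝕜 :=
  ∑ α, a α * ∏ i, φ (α i) (t i)

lemma sum_fin_succ_arrow {M : Type*} [AddCommMonoid M] (f : (Fin (n + 1) → ι) → M) :
    ∑ α, f α = ∑ k, ∑ β, f (Fin.cons k β) := by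
  rw [← (Fin.consEquiv fun _ ↦ ι).sum_comp, Fintype.sum_prod_type]
  rfl

lemma tensorSum_cons (φ : ι → X → 𝕜) (a : (Fin (n + 1) → ι) → 𝕜) (x : X) (t : Fin n → X) :
    tensorSum φ a (Fin.cons x t) =
      ∑ k, tensorSum φ (fun β ↦ a (Fin.cons k β)) t * φ k x := by
  simp only [tensorSum, sum_fin_succ_arrow, sum_mul, Fin.prod_univ_succ, Fin.cons_zero,
    Fin.cons_succ]
  refine sum_congr rfl fun k _ ↦ sum_congr rfl fun β _ ↦ ?_
  ring

variable [MeasurableSpace X] {μ : Measure X} [SigmaFinite μ]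

lemma integrable_cons {E : Type*} [NormedAddCommGroup E] {f : (Fin (n + 1) → X) → E}
    (hf : Integrable f (Measure.pi fun _ ↦ μ)) :
    Integrable (fun z : X × (Fin n → X) ↦ f (Fin.cons z.1 z.2))
      (μ.prod (Measure.pi fun _ ↦ μ)) := by
  have hpreserving := (measurePreserving_piFinSuccAbove (fun _ : Fin (n + 1) ↦ μ) 0).symm
  simpa [Function.comp_def, Fin.insertNthEquiv] using
    (hpreserving.integrable_comp_emb (MeasurableEquiv.measurableEmbedding _)).2 hf

lemma integral_pi_fin_succ {E : Type*} [NormedAddCommGroup E] [NormedSpace ℝ E]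
    {f : (Fin (n + 1) → X) → E} (hf : Integrable f (Measure.pi fun _ ↦ μ)) :
    ∫ t, f t ∂(Measure.pi fun _ ↦ μ) =
      ∫ t, ∫ x, f (Fin.cons x t) ∂μ ∂(Measure.pi fun _ : Fin n ↦ μ) := by
  have hpreserving := (measurePreserving_piFinSuccAbove (fun _ : Fin (n + 1) ↦ μ) 0).symm
  rw [← integral_prod_symm _ (integrable_cons hf), ← hpreserving.integral_comp']
  simp [Fin.insertNthEquiv]

lemma memLp_prod_eval {p : ENNReal} (hp0 : p ≠ 0) (hp : p ≠ ⊤) {f : Fin n → X → 𝕜}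
    (hf : ∀ i, MemLp (f i) p μ) :
    MemLp (fun t : Fin n → X ↦ ∏ i, f i (t i)) p (Measure.pi fun _ ↦ μ) := by
  have hmeas : AEStronglyMeasurable (fun t : Fin n → X ↦ ∏ i, f i (t i))
      (Measure.pi fun _ ↦ μ) :=
    univ.aestronglyMeasurable_fun_prod fun i _ ↦
      (hf i).1.comp_quasiMeasurePreserving (Measure.quasiMeasurePreserving_eval _ i)
  rw [← integrable_norm_rpow_iff hmeas hp0 hp]
  simp only [norm_prod, ← Real.finsetProd_rpow _ _ fun _ _ ↦ norm_nonneg _]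
  exact .fintype_prod fun i ↦ (hf i).integrable_norm_rpow hp0 hp

variable {φ : ι → X → 𝕜} {s q : ℝ}

lemma integrable_norm_tensorSum_rpow (hs : 0 < s) (hφ : ∀ k, MemLp (φ k) (ENNReal.ofReal s) μ)
    (a : (Fin n → ι) → 𝕜) :
    Integrable (fun t ↦ ‖tensorSum φ a t‖ ^ s) (Measure.pi fun _ ↦ μ) := by
  have hs0 : ENNReal.ofReal s ≠ 0 := by simpa using hs
  have hmem : MemLp (tensorSum φ a) (ENNReal.ofReal s) (Measure.pi fun _ ↦ μ) :=
    memLp_finsetSum univ fun α _ ↦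
      (memLp_prod_eval hs0 ENNReal.ofReal_ne_top fun i ↦ hφ (α i)).const_mul (a α)
  simpa [hs.le] using hmem.integrable_norm_rpow hs0 ENNReal.ofReal_ne_top

lemma integral_rpow_sum_norm_tensorSum_le (hs : 0 < s)
    (hφ : ∀ k, MemLp (φ k) (ENNReal.ofReal s) μ) {w : ι → ℝ} (hw : ∀ k, 0 ≤ w k)
    (hone : ∀ c : ι → 𝕜,
      (∑ k, w k * ‖c k‖ ^ q) ^ (s / q) ≤ ∫ x, ‖∑ k, c k * φ k x‖ ^ s ∂μ)
    (a : (Fin (n + 1) → ι) → 𝕜) :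
    ∫ t, (∑ k, w k * ‖tensorSum φ (fun β ↦ a (Fin.cons k β)) t‖ ^ q) ^ (s / q)
      ∂(Measure.pi fun _ ↦ μ) ≤ ∫ t, ‖tensorSum φ a t‖ ^ s ∂(Measure.pi fun _ ↦ μ) := by
  have hint := integrable_norm_tensorSum_rpow hs hφ a
  rw [integral_pi_fin_succ hint]
  refine integral_mono_of_nonneg (.of_forall fun t ↦ ?_) (integrable_cons hint).integral_prod_right
    (.of_forall fun t ↦ ?_)
  · exact Real.rpow_nonneg (sum_nonneg fun k _ ↦ mul_nonneg (hw k) (by positivity)) _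
  · simpa only [tensorSum_cons] using hone fun k ↦ tensorSum φ (fun β ↦ a (Fin.cons k β)) t

theorem rpow_sum_prod_mul_le_integral_norm_tensorSum (hs : 0 < s) (hsq : s ≤ q)
    (hφ : ∀ k, MemLp (φ k) (ENNReal.ofReal s) μ) {w : ι → ℝ} (hw : ∀ k, 0 ≤ w k)
    (hone : ∀ c : ι → 𝕜,
      (∑ k, w k * ‖c k‖ ^ q) ^ (s / q) ≤ ∫ x, ‖∑ k, c k * φ k x‖ ^ s ∂μ)
    (a : (Fin n → ι) → 𝕜) :
    (∑ α, (∏ i, w (α i)) * ‖a α‖ ^ q) ^ (s / q) ≤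
      ∫ t, ‖tensorSum φ a t‖ ^ s ∂(Measure.pi fun _ ↦ μ) := by
  have hq : 0 < q := hs.trans_le hsq
  have hnonneg {m : ℕ} (b : (Fin m → ι) → 𝕜) : 0 ≤ ∑ α, (∏ i, w (α i)) * ‖b α‖ ^ q :=
    sum_nonneg fun α _ ↦ mul_nonneg (prod_nonneg fun i _ ↦ hw (α i)) (by positivity)
  induction n with
  | zero =>
    rw [Measure.pi_of_empty, integral_dirac]
    simp [tensorSum, ← Real.rpow_mul, mul_div_cancel₀ s hq.ne']
  | succ n ih =>
    calc (∑ α, (∏ i, w (α i)) * ‖a α‖ ^ q) ^ (s / q)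
        = (∑ k, w k * ∑ β, (∏ i, w (β i)) * ‖a (Fin.cons k β)‖ ^ q) ^ (s / q) := by
          simp only [sum_fin_succ_arrow, Fin.prod_univ_succ, Fin.cons_zero, Fin.cons_succ, mul_sum,
            mul_assoc]
      _ ≤ (∑ k, w k * (∫ t, ‖tensorSum φ (fun β ↦ a (Fin.cons k β)) t‖ ^ s
            ∂(Measure.pi fun _ ↦ μ)) ^ (q / s)) ^ (s / q) := by
          refine Real.rpow_le_rpow (sum_nonneg fun k _ ↦ mul_nonneg (hw k) (hnonneg _))
            (sum_le_sum fun k _ ↦ mul_le_mul_of_nonneg_left ?_ (hw k)) (by positivity)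
          rw [← inv_div, Real.le_rpow_inv_iff_of_pos (hnonneg _)
            (integral_nonneg fun t ↦ by positivity) (by positivity)]
          exact ih _
      _ ≤ _ := rpow_sum_mul_integral_norm_rpow_le hs hsq hw
          fun k ↦ integrable_norm_tensorSum_rpow hs hφ _
      _ ≤ _ := integral_rpow_sum_norm_tensorSum_le hs hφ hw hone a

end Tensor

section Homogeneous

open Real

lemma sum_antidiagonalTuple_eq_sum_ite {M : Type*} [AddCommMonoid M] (n m : ℕ)
    (f : (Fin n → ℕ) → M) :
    ∑ α ∈ Finset.Nat.antidiagonalTuple n m, f α =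
      ∑ β : Fin n → Fin (m + 1), if ∑ i, (β i : ℕ) = m then f (fun i ↦ β i) else 0 := by
  rw [← sum_filter]
  refine (sum_bij (fun β _ i ↦ (β i : ℕ)) ?_ ?_ ?_ fun _ _ ↦ rfl).symm
  · simp [Finset.Nat.mem_antidiagonalTuple]
  · exact fun β _ γ _ h ↦ funext fun i ↦ Fin.ext (congrFun h i)
  · intro α hα
    have hsum : ∑ i, α i = m := Finset.Nat.mem_antidiagonalTuple.1 hα
    have hlt (i : Fin n) : α i < m + 1 :=
      Nat.lt_succ_of_le (hsum ▸ single_le_sum (fun j _ ↦ Nat.zero_le (α j)) (mem_univ i))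
    exact ⟨fun i ↦ ⟨α i, hlt i⟩, by simpa using hsum, rfl⟩

lemma rpow_sum_le_integral_norm_tensorSum_exp {s : ℝ} (hs0 : 0 < s) (hs2 : s ≤ 2) {n N : ℕ}
    (b : (Fin n → Fin N) → ℂ) :
    (∑ β, (s / 2) ^ (∑ i, (β i : ℕ)) * ‖b β‖ ^ (2 : ℝ)) ^ (s / 2) ≤
      ∫ t in Set.univ.pi fun _ : Fin n ↦ Set.Icc (0 : ℝ) 1,
        ‖tensorSum (fun (k : Fin N) t ↦ Complex.exp ((2 * π * t : ℝ) * Complex.I) ^ (k : ℕ)) b t‖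
          ^ s := by
  have hbounded (k : ℕ) : MemLp (fun t : ℝ ↦ Complex.exp ((2 * π * t : ℝ) * Complex.I) ^ k)
      (ENNReal.ofReal s) (volume.restrict (Set.Icc 0 1)) :=
    .of_bound (by fun_prop) 1
      (.of_forall fun t ↦ by rw [norm_pow, Complex.norm_exp_ofReal_mul_I, one_pow])
  have htensor := rpow_sum_prod_mul_le_integral_norm_tensorSum hs0 hs2
    (fun k : Fin N ↦ hbounded k) (w := fun k ↦ (s / 2) ^ (k : ℕ)) (fun k ↦ by positivity)
    (fun c ↦ by simpa only [rpow_two] using rpow_sum_le_integral_norm_rpow hs0 hs2 c) b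
  simpa only [volume_pi, Measure.restrict_pi_pi, prod_pow_eq_pow_sum] using htensor

lemma rpow_sum_antidiagonalTuple_le {s : ℝ} (hs0 : 0 < s) (hs2 : s ≤ 2) (m n : ℕ)
    (a : (Fin n → ℕ) → ℂ) :
    ((s / 2) ^ m * ∑ α ∈ Finset.Nat.antidiagonalTuple n m, ‖a α‖ ^ (2 : ℝ)) ^ (s / 2) ≤
      ∫ t in Set.univ.pi fun _ : Fin n ↦ Set.Icc (0 : ℝ) 1,
        ‖∑ α ∈ Finset.Nat.antidiagonalTuple n m,
          a α * ∏ i, Complex.exp ((2 * π * t i : ℝ) * Complex.I) ^ α i‖ ^ s := by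
  have htensor := rpow_sum_le_integral_norm_tensorSum_exp hs0 hs2
    fun β : Fin n → Fin (m + 1) ↦ if ∑ i, (β i : ℕ) = m then a (fun i ↦ β i) else 0
  have hweight : (s / 2) ^ m * ∑ α ∈ Finset.Nat.antidiagonalTuple n m, ‖a α‖ ^ (2 : ℝ) =
      ∑ β : Fin n → Fin (m + 1), (s / 2) ^ (∑ i, (β i : ℕ)) *
        ‖if ∑ i, (β i : ℕ) = m then a (fun i ↦ β i) else 0‖ ^ (2 : ℝ) := by
    rw [sum_antidiagonalTuple_eq_sum_ite, mul_sum]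
    refine sum_congr rfl fun β _ ↦ ?_
    split_ifs with hβ
    · rw [hβ]
    · simp
  rw [hweight]
  simpa only [tensorSum, sum_antidiagonalTuple_eq_sum_ite n m, ite_mul, zero_mul] using htensor

end Homogeneous

end Bayart

theorem bayart_inequality_general (m n : ℕ) {s : ℝ} (hs0 : 0 < s) (hs2 : s ≤ 2)
    (a : (Fin n → ℕ) → ℂ) :
    (∑ α ∈ Finset.Nat.antidiagonalTuple n m, ‖a α‖ ^ (2 : ℝ)) ^ ((1 : ℝ) / 2) ≤
      (2 / s) ^ ((m : ℝ) / 2) *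
        (∫ t : Fin n → ℝ in Set.univ.pi fun _ : Fin n => Set.Icc (0 : ℝ) 1,
          ‖∑ α ∈ Finset.Nat.antidiagonalTuple n m,
            a α * ∏ i, Complex.exp (((2 * Real.pi * t i : ℝ) : ℂ) * Complex.I) ^ α i‖ ^ s)
          ^ (1 / s) := by
  set S := ∑ α ∈ Finset.Nat.antidiagonalTuple n m, ‖a α‖ ^ (2 : ℝ)
  have hS : 0 ≤ S := sum_nonneg fun α _ ↦ by positivity
  have hroot := Real.rpow_le_rpow (by positivity)
    (Bayart.rpow_sum_antidiagonalTuple_le hs0 hs2 m n a) (one_div_nonneg.2 hs0.le)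
  rw [← Real.rpow_mul (by positivity), div_mul_div_cancel₀' hs0.ne',
    Real.mul_rpow (by positivity) hS, ← Real.rpow_natCast, ← Real.rpow_mul (by positivity),
    mul_one_div] at hroot
  rwa [← inv_div s 2, Real.inv_rpow (by positivity), ← div_eq_inv_mul, le_div_iff₀' (by positivity)]

/-- Bayart's inequality.  For `1 ≤ s ≤ 2` and every `m`-homogeneous
polynomial `P(z) = ∑_{|α|=m} a_α z^α` on `ℂ^n`,
`(∑ |a_α|²)^{1/2} ≤ (2/s)^{m/2} (∫_{𝕋^n} |P(z)|^s dμ^n(z))^{1/s}`,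
where the normalized Haar measure on the `n`-torus is parametrized by
`z_i = exp(2πi t_i)` with `t` ranging over the unit cube `[0,1]^n` with Lebesgue measure. -/
theorem bayart_inequality (m n : ℕ) (hm : 0 < m) (hn : 0 < n)
    (s : ℝ) (hs1 : 1 ≤ s) (hs2 : s ≤ 2) (a : (Fin n → ℕ) → ℂ) :
    (∑ α ∈ Finset.Nat.antidiagonalTuple n m, ‖a α‖ ^ (2 : ℝ)) ^ ((1 : ℝ) / 2) ≤
      (2 / s) ^ ((m : ℝ) / 2) *
        (∫ t : Fin n → ℝ in Set.univ.pi fun _ : Fin n => Set.Icc (0 : ℝ) 1,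
          ‖∑ α ∈ Finset.Nat.antidiagonalTuple n m,
            a α * ∏ i, Complex.exp (((2 * Real.pi * t i : ℝ) : ℂ) * Complex.I) ^ α i‖ ^ s)
          ^ (1 / s) :=
  bayart_inequality_general m n (by linarith) hs2 a
end

section
/- Let X be a complex normed linear space, let P be a continuous m-homogeneous polynomial on X with polar L (the unique symmetric continuous m-linear form with L(x,…,x) = P(x)). Then for any nonnegative integers m_1,…,m_k with m_1 + ⋯ + m_k = m and any unit vectors x^{(1)},…,x^{(k)} ∈ X, |L(x^{(1)},…,x^{(1)},…,x^{(k)},…,x^{(k)})| ≤ (m_1!⋯m_k! · m^m)/(m_1^{m_1}⋯m_k^{m_k} · m!) · ‖P‖, where x^{(j)} appears m_j times and ‖P‖ := sup{|P(x)| : ‖x‖ ≤ 1}. -/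
open Finset Nat

/-!
Expanding `L` by multilinearity, `P (∑ j, z j • x j)` is a polynomial in `z` whose coefficient at
`∏ j, z j ^ m_j` is `m! / (m_1! ⋯ m_k!)` times the value of `L` to be bounded: by symmetry all
rearrangements of the tuple contribute equally, and orbit-stabilizer counts them. Cauchy's estimate
on the torus `‖z j‖ = m_j / m`, which `z ↦ ∑ j, z j • x j` maps into the unit ball, bounds that
coefficient. The Cauchy estimate is obtained by averaging over roots of unity of large order in
place of integrating over the torus.
-/

section FiberCard

variable {ι κ : Type*} [Fintype ι] [DecidableEq κ]

/-- The number of times the tuple `f` takes the value `j`; as a function of `j`, this is the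
multi-index `(m_1, …, m_k)` of the multiplicities in `f`. -/
def fiberCard (f : ι → κ) (j : κ) : ℕ := #{i | f i = j}

theorem sum_fiberCard [Fintype κ] (f : ι → κ) : ∑ j, fiberCard f j = Fintype.card ι :=
  (card_eq_sum_card_fiberwise fun _ _ => mem_coe.2 (mem_univ _)).symm

theorem prod_comp_eq_prod_pow_fiberCard {M : Type*} [CommMonoid M] [Fintype κ]
    (f : ι → κ) (z : κ → M) : ∏ i, z (f i) = ∏ j, z j ^ fiberCard f j := by
  simp only [← prod_fiberwise' univ f z, prod_const, fiberCard]

theorem fiberCard_eq_iff_exists_perm {f g : ι → κ} :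
    fiberCard g = fiberCard f ↔ ∃ σ : Equiv.Perm ι, f ∘ σ = g := by
  refine ⟨fun h => ?_, ?_⟩
  · have fiberEquiv (j : κ) : Nonempty ({i // g i = j} ≃ {i // f i = j}) := by
      rw [← Fintype.card_eq, Fintype.card_subtype, Fintype.card_subtype]
      exact congrFun h j
    exact ⟨Equiv.ofFiberEquiv fun j => (fiberEquiv j).some, funext (Equiv.ofFiberEquiv_map _)⟩
  · rintro ⟨σ, rfl⟩
    exact funext fun j => card_equiv σ (by simp)

theorem card_fiberCard_eq_mul_prod_factorial [DecidableEq ι] [Fintype κ] (f : ι → κ) :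
    #{g : ι → κ | fiberCard g = fiberCard f} * ∏ j, (fiberCard f j)! = (Fintype.card ι)! := by
  have orbit_eq : MulAction.orbit (Equiv.Perm ι)ᵈᵐᵃ f =
      ({g : ι → κ | fiberCard g = fiberCard f} : Finset (ι → κ)) := by
    ext g
    simp only [coe_filter_univ, Set.mem_ofPred_eq, fiberCard_eq_iff_exists_perm]
    exact DomMulAct.mk.symm.exists_congr_left
  have card_stabilizer : Nat.card (MulAction.stabilizer (Equiv.Perm ι)ᵈᵐᵃ f) =
      ∏ j, (fiberCard f j)! := by
    simp only [fiberCard, ← Fintype.card_subtype]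
    rw [← DomMulAct.stabilizer_card f, ← Nat.card_eq_fintype_card]
    exact Nat.card_congr (DomMulAct.mk.symm.subtypeEquiv fun _ => DomMulAct.mem_stabilizer_iff)
  rw [← card_stabilizer, ← Set.ncard_coe_finset, ← orbit_eq, ← MulAction.index_stabilizer,
    Subgroup.index_mul_card, ← Nat.card_congr DomMulAct.mk, Nat.card_perm,
    Nat.card_eq_fintype_card]

end FiberCard

section CauchyEstimate

variable {κ : Type*} [Fintype κ]

theorem sum_prod_mulShift [DecidableEq κ] {R R' : Type*} [CommRing R] [Fintype R] [DecidableEq R]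
    [CommRing R'] [IsDomain R'] {ψ : AddChar R R'} (hψ : ψ.IsPrimitive) (b : κ → R) :
    ∑ a : κ → R, ∏ j, ψ (a j * b j) =
      if b = 0 then (Fintype.card R : R') ^ Fintype.card κ else 0 := by
  rw [← Fintype.piFinset_univ, ← prod_univ_sum (fun _ => univ) fun j a => ψ (a * b j)]
  simp only [AddChar.sum_mulShift _ hψ]
  split_ifs with hb
  · simp [hb]
  · obtain ⟨j, hj : b j ≠ 0⟩ := Function.ne_iff.1 hb
    exact prod_eq_zero (mem_univ j) (by rw [if_neg hj, Nat.cast_zero])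

variable {α F : Type*} (s : Finset α) (e : α → κ → ℕ)

theorem sum_rootsOfUnity_smul_eq_coeff [DecidableEq κ] [AddCommMonoid F] [Module ℂ F] (c : α → F)
    (r : κ → ℂ) {N : ℕ} [NeZero N] (he : ∀ i ∈ s, ∀ j, e i j < N) {v : κ → ℕ} (hv : ∀ j, v j < N) :
    ∑ a : κ → ZMod N, (∏ j, ZMod.stdAddChar (-(a j * (v j : ZMod N)))) •
        ∑ i ∈ s, (∏ j, (r j * ZMod.stdAddChar (a j)) ^ e i j) • c i =
      (N : ℂ) ^ Fintype.card κ • (∏ j, r j ^ v j) • ∑ i ∈ s with e i = v, c i := by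
  have monomial_mul (a : κ → ZMod N) (i : α) :
      (∏ j, ZMod.stdAddChar (-(a j * (v j : ZMod N)))) *
          ∏ j, (r j * ZMod.stdAddChar (a j)) ^ e i j =
        (∏ j, r j ^ e i j) * ∏ j, ZMod.stdAddChar (a j * ((e i j : ZMod N) - (v j : ZMod N))) := by
    simp only [← prod_mul_distrib]
    refine prod_congr rfl fun j _ => ?_
    rw [mul_sub, sub_eq_add_neg, AddChar.map_add_eq_mul, mul_comm (a j) (e i j), ← nsmul_eq_mul,
      AddChar.map_nsmul_eq_pow, mul_pow]
    ring
  have exponent_eq_iff (i : α) (hi : i ∈ s) :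
      (fun j => (e i j : ZMod N) - (v j : ZMod N)) = 0 ↔ e i = v := by
    simp only [funext_iff, Pi.zero_apply, sub_eq_zero, ZMod.natCast_eq_natCast_iff',
      Nat.mod_eq_of_lt (he i hi _), Nat.mod_eq_of_lt (hv _)]
  simp only [smul_sum, smul_smul, monomial_mul]
  rw [sum_comm, sum_filter]
  refine sum_congr rfl fun i hi => ?_
  rw [← sum_smul, ← mul_sum,
    sum_prod_mulShift (ZMod.isPrimitive_stdAddChar N) fun j => (e i j : ZMod N) - (v j : ZMod N),
    ZMod.card]
  simp only [exponent_eq_iff i hi]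
  split_ifs with h
  · rw [h, mul_comm]
  · simp

/-- Cauchy's estimate. Since `e` need not be injective, the coefficient of `∏ j, z j ^ v j` is the
sum of all `c i` with `e i = v`. -/
theorem prod_pow_mul_norm_coeff_le [SeminormedAddCommGroup F] [NormedSpace ℂ F]
    (c : α → F) {r : κ → ℝ} (hr : ∀ j, 0 ≤ r j) {M : ℝ}
    (hM : ∀ z : κ → ℂ, (∀ j, ‖z j‖ = r j) → ‖∑ i ∈ s, (∏ j, z j ^ e i j) • c i‖ ≤ M)
    (v : κ → ℕ) :
    (∏ j, r j ^ v j) * ‖∑ i ∈ s with e i = v, c i‖ ≤ M := by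
  classical
  obtain ⟨N, he, hv⟩ : ∃ N, (∀ i ∈ s, ∀ j, e i j < N + 1) ∧ ∀ j, v j < N + 1 := by
    refine ⟨(s.sup fun i => univ.sup (e i)) ⊔ univ.sup v, fun i hi j => ?_, fun j => ?_⟩
    · exact Nat.lt_succ_of_le (le_sup_of_le_left
        ((le_sup (mem_univ j)).trans (le_sup (f := fun i => univ.sup (e i)) hi)))
    · exact Nat.lt_succ_of_le (le_sup_of_le_right (le_sup (mem_univ j)))
  have term_le (a : κ → ZMod (N + 1)) :
      ‖(∏ j, ZMod.stdAddChar (-(a j * (v j : ZMod (N + 1))))) •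
        ∑ i ∈ s, (∏ j, ((r j : ℂ) * ZMod.stdAddChar (a j)) ^ e i j) • c i‖ ≤ M := by
    rw [norm_smul, norm_prod]
    simp only [AddChar.norm_apply, prod_const_one, one_mul]
    exact hM _ fun j => by simp [abs_of_nonneg (hr j)]
  refine le_of_mul_le_mul_left (a := ((N + 1 : ℕ) : ℝ) ^ Fintype.card κ) ?_ (by positivity)
  calc ((N + 1 : ℕ) : ℝ) ^ Fintype.card κ * ((∏ j, r j ^ v j) * ‖∑ i ∈ s with e i = v, c i‖)
      = ‖((N + 1 : ℕ) : ℂ) ^ Fintype.card κ • (∏ j, (r j : ℂ) ^ v j) •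
          ∑ i ∈ s with e i = v, c i‖ := by
        simp [norm_smul, abs_of_nonneg (hr _), -Nat.cast_add]
    _ ≤ ∑ _a : κ → ZMod (N + 1), M := by
        rw [← sum_rootsOfUnity_smul_eq_coeff s e c _ he hv]
        exact norm_sum_le_of_le _ fun a _ => term_le a
    _ = ((N + 1 : ℕ) : ℝ) ^ Fintype.card κ * M := by
        simp [ZMod.card]

end CauchyEstimate

section Polarization

theorem norm_diagonal_le_sSup {ι 𝕜 X F : Type*} [Finite ι] [NontriviallyNormedField 𝕜]
    [SeminormedAddCommGroup X] [NormedSpace 𝕜 X] [SeminormedAddCommGroup F] [NormedSpace 𝕜 F]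
    (L : ContinuousMultilinearMap 𝕜 (fun _ : ι => X) F) {z : X} (hz : ‖z‖ ≤ 1) :
    ‖L fun _ => z‖ ≤ sSup {y : ℝ | ∃ z : X, ‖z‖ ≤ 1 ∧ y = ‖L fun _ => z‖} := by
  cases nonempty_fintype ι
  refine le_csSup ⟨‖L‖, ?_⟩ ⟨z, hz, rfl⟩
  rintro _ ⟨w, hw, rfl⟩
  exact L.unit_le_opNorm ((pi_norm_const_le w).trans hw)

variable {ι κ X F : Type*} [Fintype ι] [Fintype κ] [DecidableEq κ]

section Algebra

variable {R : Type*} [CommSemiring R] [AddCommMonoid X] [Module R X] [AddCommMonoid F] [Module R F]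
  (L : MultilinearMap R (fun _ : ι => X) F)

theorem map_sum_smul_diagonal [DecidableEq ι] (z : κ → R) (x : κ → X) :
    (L fun _ => ∑ j, z j • x j) =
      ∑ g : ι → κ, (∏ j, z j ^ fiberCard g j) • L fun i => x (g i) := by
  rw [L.map_sum]
  exact sum_congr rfl fun g _ => by
    rw [L.map_smul_univ (fun i => z (g i)), prod_comp_eq_prod_pow_fiberCard]

theorem sum_map_comp_of_fiberCard_eq [DecidableEq ι]
    (hsym : ∀ (σ : Equiv.Perm ι) (x : ι → X), (L fun i => x (σ i)) = L x)
    (x : κ → X) (f : ι → κ) :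
    (∑ g : ι → κ with fiberCard g = fiberCard f, L fun i => x (g i)) =
      #{g : ι → κ | fiberCard g = fiberCard f} • L fun i => x (f i) := by
  refine sum_eq_card_nsmul fun g hg => ?_
  obtain ⟨σ, rfl⟩ := fiberCard_eq_iff_exists_perm.1 (mem_filter.1 hg).2
  exact hsym σ fun i => x (f i)

end Algebra

variable [SeminormedAddCommGroup X] [NormedSpace ℂ X] [SeminormedAddCommGroup F] [NormedSpace ℂ F]

theorem prod_pow_mul_card_mul_norm_map_comp_le [DecidableEq ι]
    (L : MultilinearMap ℂ (fun _ : ι => X) F)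
    (hsym : ∀ (σ : Equiv.Perm ι) (x : ι → X), (L fun i => x (σ i)) = L x)
    {M : ℝ} (hM : ∀ z : X, ‖z‖ ≤ 1 → ‖L fun _ => z‖ ≤ M) {x : κ → X} (hx : ∀ j, ‖x j‖ ≤ 1)
    (f : ι → κ) {r : κ → ℝ} (hr : ∀ j, 0 ≤ r j) (hr_sum : ∑ j, r j ≤ 1) :
    (∏ j, r j ^ fiberCard f j) *
      (#{g : ι → κ | fiberCard g = fiberCard f} * ‖L fun i => x (f i)‖) ≤ M := by
  have torus_subset_ball (z : κ → ℂ) (hz : ∀ j, ‖z j‖ = r j) : ‖∑ j, z j • x j‖ ≤ 1 :=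
    calc ‖∑ j, z j • x j‖ ≤ ∑ j, r j := norm_sum_le_of_le _ fun j _ => by
          rw [norm_smul, hz]
          exact mul_le_of_le_one_right (hr j) (hx j)
      _ ≤ 1 := hr_sum
  have cauchy := prod_pow_mul_norm_coeff_le univ fiberCard (fun g => L fun i => x (g i)) hr
    (fun z hz => map_sum_smul_diagonal L z x ▸ hM _ (torus_subset_ball z hz)) (fiberCard f)
  rwa [sum_map_comp_of_fiberCard_eq L hsym, ← Nat.cast_smul_eq_nsmul ℝ, norm_smul,
    Real.norm_natCast] at cauchy

theorem harris_polarization_general (L : MultilinearMap ℂ (fun _ : ι => X) F)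
    (hsym : ∀ (σ : Equiv.Perm ι) (x : ι → X), (L fun i => x (σ i)) = L x)
    {M : ℝ} (hM : ∀ z : X, ‖z‖ ≤ 1 → ‖L fun _ => z‖ ≤ M) {x : κ → X} (hx : ∀ j, ‖x j‖ ≤ 1)
    (f : ι → κ) :
    ‖L fun i => x (f i)‖ ≤
      (((∏ j, (fiberCard f j)!) * Fintype.card ι ^ Fintype.card ι : ℕ) : ℝ) /
        (((∏ j, fiberCard f j ^ fiberCard f j) * (Fintype.card ι)! : ℕ) : ℝ) * M := by
  classical
  have sum_radii_le_one : ∑ j, (fiberCard f j : ℝ) / Fintype.card ι ≤ 1 := by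
    rw [← sum_div, ← Nat.cast_sum, sum_fiberCard]
    exact div_self_le_one _
  have coeff_bound := prod_pow_mul_card_mul_norm_map_comp_le L hsym hM hx f
    (fun j => by positivity) sum_radii_le_one
  simp only [div_pow, prod_div_distrib, prod_pow_eq_pow_sum, sum_fiberCard] at coeff_bound
  rw [← card_fiberCard_eq_mul_prod_factorial f]
  have card_ne_zero : #{g : ι → κ | fiberCard g = fiberCard f} ≠ 0 :=
    card_ne_zero_of_mem (mem_filter.2 ⟨mem_univ f, rfl⟩)
  have prod_pow_ne_zero : ∏ j, (fiberCard f j : ℝ) ^ fiberCard f j ≠ 0 :=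
    prod_ne_zero_iff.2 fun j _ => mod_cast (Nat.pow_self_pos (n := fiberCard f j)).ne'
  have prod_factorial_ne_zero : ∏ j, ((fiberCard f j)! : ℝ) ≠ 0 :=
    prod_ne_zero_iff.2 fun j _ => mod_cast factorial_ne_zero _
  have card_pow_ne_zero : (Fintype.card ι : ℝ) ^ Fintype.card ι ≠ 0 :=
    mod_cast (Nat.pow_self_pos (n := Fintype.card ι)).ne'
  refine le_of_eq_of_le ?_ (mul_le_mul_of_nonneg_left coeff_bound (by positivity))
  push_cast
  field_simp

end Polarization

/-- Harris.  Let `X` be a complex normed space, `P` a continuous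
`m`-homogeneous polynomial on `X` with polar `L` (a continuous symmetric `m`-linear form
with `L(x,…,x) = P(x)`).  For nonnegative integers `m_1,…,m_k` with `m_1 + ⋯ + m_k = m` and
unit vectors `x^{(1)},…,x^{(k)}`,
`|L(x^{(1)},…,x^{(1)},…,x^{(k)},…,x^{(k)})| ≤ (m_1!⋯m_k! m^m)/(m_1^{m_1}⋯m_k^{m_k} m!) ‖P‖`,
where `x^{(j)}` is repeated `m_j` times; the repeated tuple is encoded by any
`f : Fin m → Fin k` whose fiber over `j` has cardinality `m_j`. -/
theorem harris_polarization {X : Type*} [NormedAddCommGroup X] [NormedSpace ℂ X]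
    (m : ℕ) (hm : 0 < m)
    (L : ContinuousMultilinearMap ℂ (fun _ : Fin m => X) ℂ)
    (hsym : ∀ (σ : Equiv.Perm (Fin m)) (x : Fin m → X), L (fun i => x (σ i)) = L x)
    (k : ℕ) (v : Fin k → ℕ) (hv : ∑ j, v j = m)
    (x : Fin k → X) (hx : ∀ j, ‖x j‖ = 1)
    (f : Fin m → Fin k) (hf : ∀ j, (Finset.univ.filter fun i => f i = j).card = v j) :
    ‖L fun i => x (f i)‖ ≤
      (((∏ j, (v j)!) * m ^ m : ℕ) : ℝ) / (((∏ j, (v j) ^ (v j)) * m ! : ℕ) : ℝ) *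
        sSup {y : ℝ | ∃ z : X, ‖z‖ ≤ 1 ∧ y = ‖L fun _ => z‖} := by
  obtain rfl : fiberCard f = v := funext hf
  simpa only [Fintype.card_fin] using! harris_polarization_general L.toMultilinearMap hsym
    (fun _ hz => norm_diagonal_le_sSup L hz) (fun j => (hx j).le) f
end
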